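/- arXiv:1205.1966 — 2 statements merged into one kernel-verified Lean document; each statement's English description precedes it below -/
import Mathlib

section
/- Let H = (H(t))_{t≥0} and G = (G(t))_{t≥0} be nonnegative, right-continuous, 𝔉-adapted processes such that 𝔼(sup_{t≥0} H(t)) < ∞, G is a supermartingale with sup_{t≥0} 𝔼(G(t)) < ∞, and H(0) = h₀ and G(0) = g₀ are a.s. equal to constants. If sup over 𝔉-stopping times τ of 𝔼(H(τ)) = h₀, then sup over 𝔉-stopping times τ of 𝔼(H(τ) + G(τ)) = h₀ + g₀. (This is the content of the lemma asserting that the stopping set of a gain function h is contained in the stopping set of h + g whenever the discounted g-process is a nonnegative right-continuous supermartingale.) -/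
open MeasureTheory Set Filter
open scoped ENNReal NNReal

noncomputable section

variable {Ω : Type*}

/-- `𝒢^ρ`: the smallest filtration making the `[0,∞]`-valued map `ρ` a stopping time,
`𝒢^ρ_t = σ({ρ ≤ s} : s ≤ t)`. -/
def genFilt (ρ : Ω → ℝ≥0∞) (t : ℝ≥0) : MeasurableSpace Ω :=
  MeasurableSpace.generateFrom {A | ∃ s : ℝ≥0, s ≤ t ∧ A = {ω | ρ ω ≤ (s : ℝ≥0∞)}}

/-- `𝔄^ρ`: the smallest right-continuous filtration containing `𝔄` for which `ρ` is a
stopping time, i.e. the right-continuous regularization of `t ↦ σ(𝒜_t, 𝒢^ρ_t)`. -/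
def rcEnlarge (𝔄 : ℝ≥0 → MeasurableSpace Ω) (ρ : Ω → ℝ≥0∞) (t : ℝ≥0) :
    MeasurableSpace Ω :=
  ⨅ s ∈ Set.Ioi t, (𝔄 s ⊔ genFilt ρ s)

/-- Iterated enlargement `𝔄^{ρ₀,…,ρ_{i-1}}`. -/
def enrichedFilt (𝔄 : ℝ≥0 → MeasurableSpace Ω) (ρ : ℕ → Ω → ℝ≥0∞) :
    ℕ → ℝ≥0 → MeasurableSpace Ω
  | 0 => 𝔄
  | i + 1 => rcEnlarge (enrichedFilt 𝔄 ρ i) (ρ i)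

/-- `ρ : Ω → [0,∞]` is a stopping time with respect to the filtration `𝔄 = (𝒜_t)_{t ≥ 0}`. -/
def IsStoppingTimeE (𝔄 : ℝ≥0 → MeasurableSpace Ω) (ρ : Ω → ℝ≥0∞) : Prop :=
  ∀ t : ℝ≥0, MeasurableSet[𝔄 t] {ω | ρ ω ≤ (t : ℝ≥0∞)}

/-- The σ-algebra `𝒜_ρ` of events prior to the random time `ρ`. -/
def sigmaAt (𝔄 : ℝ≥0 → MeasurableSpace Ω) (ρ : Ω → ℝ≥0∞) : MeasurableSpace Ω :=
  MeasurableSpace.generateFrom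
    {A | ∀ t : ℝ≥0, MeasurableSet[𝔄 t] (A ∩ {ω | ρ ω ≤ (t : ℝ≥0∞)})}

/-- Evaluation `Y(τ)` of a process at a `[0,∞]`-valued random time, with the convention
`Y(∞) := limsup_{t→∞} Y(t)`. -/
def evalAt (Y : ℝ≥0 → Ω → ℝ) (τ : Ω → ℝ≥0∞) (ω : Ω) : ℝ :=
  if τ ω ≠ ∞ then Y (τ ω).toNNReal ω
  else limsup (fun t : ℝ≥0 => Y t ω) atTop

/-- Right-continuity of a filtration. -/
def RightContinuousFilt (𝔄 : ℝ≥0 → MeasurableSpace Ω) : Prop :=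
  ∀ t : ℝ≥0, 𝔄 t = ⨅ s ∈ Set.Ioi t, 𝔄 s

variable {m0 : MeasurableSpace Ω}

/-- `Z` is (a version of) the essential supremum of the family of random variables `F`. -/
def IsEssSupFam (μ : Measure Ω) (F : Set (Ω → ℝ)) (Z : Ω → ℝ) : Prop :=
  (∀ f ∈ F, f ≤ᵐ[μ] Z) ∧ ∀ g : Ω → ℝ, (∀ f ∈ F, f ≤ᵐ[μ] g) → Z ≤ᵐ[μ] g

/-- The set of strategies `𝒮^n_σ(δ, 𝔄)` (0-indexed: `τ 0` is the first exercise `τ₁`,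
`δ 0` is the first waiting time `δ₁`). -/
def IsStrategy (𝔄 : ℝ≥0 → MeasurableSpace Ω) (δ : ℕ → Ω → ℝ≥0∞) (n : ℕ)
    (σ : Ω → ℝ≥0∞) (τ : ℕ → Ω → ℝ≥0∞) : Prop :=
  IsStoppingTimeE 𝔄 (τ 0) ∧ (∀ ω, σ ω ≤ τ 0 ω) ∧
    ∀ i : ℕ, i + 1 < n →
      IsStoppingTimeE (enrichedFilt 𝔄 (fun j ω => τ j ω + δ j ω) (i + 1)) (τ (i + 1)) ∧
      ∀ ω, τ i ω + δ i ω ≤ τ (i + 1) ω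

/-- `Σ_{i=1}^n Y(τ_i)`. -/
def rewardSum (Y : ℝ≥0 → Ω → ℝ) (n : ℕ) (τ : ℕ → Ω → ℝ≥0∞) (ω : Ω) : ℝ :=
  ∑ i ∈ Finset.range n, evalAt Y (τ i) ω

/-- The family of random variables whose essential supremum is `Z_n^{δ,𝔄}(σ)`. -/
def gainFam (μ : Measure Ω) (Y : ℝ≥0 → Ω → ℝ) (𝔄 : ℝ≥0 → MeasurableSpace Ω)
    (δ : ℕ → Ω → ℝ≥0∞) (n : ℕ) (σ : Ω → ℝ≥0∞) : Set (Ω → ℝ) :=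
  {g | ∃ τ : ℕ → Ω → ℝ≥0∞, IsStrategy 𝔄 δ n σ τ ∧
    g = μ[rewardSum Y n τ | sigmaAt 𝔄 σ]}

/-- The family of random variables whose essential supremum is `Z_n^{δ,𝔄}(σ)_disc`. -/
def gainFamDisc (μ : Measure Ω) (Y : ℝ≥0 → Ω → ℝ) (𝔄 : ℝ≥0 → MeasurableSpace Ω)
    (δ : ℕ → Ω → ℝ≥0∞) (n : ℕ) (σ : Ω → ℝ≥0∞) : Set (Ω → ℝ) :=
  {g | ∃ τ : ℕ → Ω → ℝ≥0∞, IsStrategy 𝔄 δ n σ τ ∧ (Set.range (τ 0)).Countable ∧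
    g = μ[rewardSum Y n τ | sigmaAt 𝔄 σ]}

/-- The hitting time `ρ_τ^B = inf{t > τ : X(t) ∈ B}` of `B` strictly after the random time `τ`. -/
def hitAfterE (X : ℝ≥0 → Ω → ℝ) (B : Set ℝ) (τ : Ω → ℝ≥0∞) (ω : Ω) : ℝ≥0∞ :=
  ⨅ u ∈ {u : ℝ≥0 | τ ω < (u : ℝ≥0∞) ∧ X u ω ∈ B}, (u : ℝ≥0∞)

/-- The set of strategies `𝒮^n_σ(B)` of the second model. -/
def IsStrategyB (𝔉 : ℝ≥0 → MeasurableSpace Ω) (X : ℝ≥0 → Ω → ℝ) (B : ℕ → Set ℝ)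
    (n : ℕ) (σ : Ω → ℝ≥0∞) (τ : ℕ → Ω → ℝ≥0∞) : Prop :=
  (∀ i < n, IsStoppingTimeE 𝔉 (τ i)) ∧ (∀ ω, σ ω ≤ τ 0 ω) ∧
    ∀ i : ℕ, i + 1 < n → ∀ ω, hitAfterE X (B i) (τ i) ω ≤ τ (i + 1) ω

/-- The family of random variables whose essential supremum is `Z_n^B(σ)` (second model). -/
def gainFamB (μ : Measure Ω) (Y : ℝ≥0 → Ω → ℝ) (𝔉 : ℝ≥0 → MeasurableSpace Ω)
    (X : ℝ≥0 → Ω → ℝ) (B : ℕ → Set ℝ) (n : ℕ) (σ : Ω → ℝ≥0∞) : Set (Ω → ℝ) :=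
  {g | ∃ τ : ℕ → Ω → ℝ≥0∞, IsStrategyB 𝔉 X B n σ τ ∧
    g = μ[rewardSum Y n τ | sigmaAt 𝔉 σ]}


/-- The `p`-th point of the dyadic grid of mesh `2^{-m}`. -/
def gridPt (m p : ℕ) : ℝ≥0 := (p : ℝ≥0) / 2 ^ m

lemma exists_gridPt_between {t u : ℝ≥0} (h : t < u) :
    ∃ m p, t < gridPt m p ∧ gridPt m p < u := by
  obtain ⟨m, hm⟩ := exists_pow_lt_of_lt_one (tsub_pos_of_lt h)
    (by norm_num : (1 / 2 : ℝ≥0) < 1)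
  refine ⟨m, ⌊t * 2 ^ m⌋₊ + 1, ?_, ?_⟩
  · unfold gridPt
    rw [lt_div_iff₀ (by positivity)]
    push_cast
    exact Nat.lt_floor_add_one _
  · unfold gridPt
    rw [div_lt_iff₀ (by positivity)]
    push_cast
    have h1 : ((⌊t * 2 ^ m⌋₊ : ℕ) : ℝ≥0) ≤ t * 2 ^ m := Nat.floor_le (by positivity)
    have h2 : (1 : ℝ≥0) < (u - t) * 2 ^ m := by
      rw [one_div, inv_pow, inv_lt_iff_one_lt_mul₀ (by positivity)] at hm
      exact hm
    have h3 : u = t + (u - t) := (add_tsub_cancel_of_le h.le).symm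
    rw [h3, add_mul]
    exact add_lt_add_of_le_of_lt h1 h2

lemma exists_gridPt_gt {F : ℝ≥0 → ℝ} {t : ℝ≥0} (hF : ContinuousWithinAt F (Set.Ici t) t)
    {c : ℝ} (hc : c < F t) : ∃ m p, t < gridPt m p ∧ c < F (gridPt m p) := by
  have h := hF.eventually (lt_mem_nhds hc)
  obtain ⟨u, hu, hsub⟩ := mem_nhdsGE_iff_exists_Ico_subset.1 h
  obtain ⟨m, p, h1, h2⟩ := exists_gridPt_between hu
  exact ⟨m, p, h1, hsub ⟨h1.le, h2⟩⟩

/-- Dyadic index of the discretization from above of a random time, capped at `m`. -/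
def gridIdx (τ : Ω → ℝ≥0∞) (m : ℕ) (ω : Ω) : ℕ := ⌈(min (τ ω) m).toNNReal * 2 ^ m⌉₊

lemma gridIdx_le_iff (τ : Ω → ℝ≥0∞) (m : ℕ) (ω : Ω) (j : ℕ) :
    gridIdx τ m ω ≤ j ↔ τ ω ≤ (gridPt m j : ℝ≥0) ∨ (m : ℝ≥0) ≤ gridPt m j := by
  unfold gridIdx gridPt
  have hne : min (τ ω) (m : ℝ≥0∞) ≠ ∞ :=
    ne_top_of_le_ne_top (ENNReal.natCast_ne_top m) (min_le_right _ _)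
  rw [Nat.ceil_le, ← le_div_iff₀ (by positivity), ← ENNReal.coe_le_coe, ENNReal.coe_toNNReal hne,
    min_le_iff]
  refine or_congr Iff.rfl ?_
  rw [← ENNReal.coe_natCast, ENNReal.coe_le_coe]

lemma gridIdx_le (τ : Ω → ℝ≥0∞) (m : ℕ) (ω : Ω) : gridIdx τ m ω ≤ m * 2 ^ m := by
  rw [gridIdx_le_iff]
  right
  unfold gridPt
  push_cast
  rw [mul_div_assoc, div_self (by positivity), mul_one]

lemma gridPt_mono (m : ℕ) : Monotone (gridPt m) := by
  intro a b h
  unfold gridPt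
  gcongr

lemma gridIdx_meas {𝔉 : ℝ≥0 → MeasurableSpace Ω} {τ : Ω → ℝ≥0∞} (hτ : IsStoppingTimeE 𝔉 τ)
    (m j : ℕ) : MeasurableSet[𝔉 (gridPt m j)] {ω | gridIdx τ m ω ≤ j} := by
  simp only [gridIdx_le_iff]
  by_cases h : (m : ℝ≥0) ≤ gridPt m j
  · simp [h]
  · simpa [h] using hτ (gridPt m j)

lemma gridPt_gridIdx_top {τ : Ω → ℝ≥0∞} {ω : Ω} (h : τ ω = ∞) (m : ℕ) :
    gridPt m (gridIdx τ m ω) = m := by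
  unfold gridPt gridIdx
  have : ((m : ℝ≥0) * 2 ^ m) = ((m * 2 ^ m : ℕ) : ℝ≥0) := by push_cast; rfl
  simp only [h, le_top, inf_of_le_right, ENNReal.toNNReal_natCast]
  rw [this, Nat.ceil_natCast]
  push_cast
  rw [mul_div_assoc, div_self (by positivity), mul_one]

lemma gridPt_gridIdx_tendsto {τ : Ω → ℝ≥0∞} {ω : Ω} (h : τ ω ≠ ∞) :
    Tendsto (fun m => gridPt m (gridIdx τ m ω)) atTop
      (nhdsWithin (τ ω).toNNReal (Set.Ici (τ ω).toNNReal)) := by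
  set t := (τ ω).toNNReal with ht
  have hτ : τ ω = (t : ℝ≥0∞) := (ENNReal.coe_toNNReal h).symm
  obtain ⟨N, hN⟩ := exists_nat_ge t
  have hidx : ∀ m ≥ N, gridIdx τ m ω = ⌈t * 2 ^ m⌉₊ := by
    intro m hm
    unfold gridIdx
    have : τ ω ≤ (m : ℝ≥0∞) := by
      rw [hτ]
      have : t ≤ (m : ℝ≥0) := hN.trans (by exact_mod_cast hm)
      exact_mod_cast this
    rw [min_eq_left this]
  have hge : ∀ᶠ m in atTop, t ≤ gridPt m (gridIdx τ m ω) := by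
    filter_upwards [eventually_ge_atTop N] with m hm
    rw [hidx m hm, gridPt, le_div_iff₀ (by positivity)]
    exact Nat.le_ceil _
  refine tendsto_nhdsWithin_iff.2 ⟨?_, hge⟩
  have hup : ∀ᶠ m in atTop, gridPt m (gridIdx τ m ω) ≤ t + (1 / 2) ^ m := by
    filter_upwards [eventually_ge_atTop N] with m hm
    rw [hidx m hm, gridPt, div_le_iff₀ (by positivity), add_mul, ← mul_pow]
    norm_num
    exact (Nat.ceil_lt_add_one (by positivity)).le
  refine tendsto_of_tendsto_of_tendsto_of_le_of_le' tendsto_const_nhds ?_ hge hup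
  have := (tendsto_pow_atTop_nhds_zero_of_lt_one (r := (1 / 2 : ℝ≥0)) (by positivity)
    (by norm_num)).const_add t
  simpa using this

lemma measurable_gridIdx {𝔉 : ℝ≥0 → MeasurableSpace Ω} (hle : ∀ t, 𝔉 t ≤ m0)
    {τ : Ω → ℝ≥0∞} (hτ : IsStoppingTimeE 𝔉 τ) (m : ℕ) : Measurable (gridIdx τ m) :=
  measurable_of_Iic fun j => hle _ _ (gridIdx_meas hτ m j)

lemma measurable_nat_eval {f : ℕ → Ω → ℝ} (hf : ∀ n, Measurable (f n)) {N : Ω → ℕ}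
    (hN : Measurable N) : Measurable (fun ω => f (N ω) ω) := by
  have h1 : Measurable (fun q : ℕ × Ω => f q.1 q.2) :=
    measurable_from_prod_countable_right hf
  exact h1.comp (hN.prodMk measurable_id)

lemma measurable_gridEval {𝔉 : ℝ≥0 → MeasurableSpace Ω} (hle : ∀ t, 𝔉 t ≤ m0)
    {τ : Ω → ℝ≥0∞} (hτ : IsStoppingTimeE 𝔉 τ) {H : ℝ≥0 → Ω → ℝ}
    (hH : ∀ t, Measurable[𝔉 t] (H t)) (m : ℕ) :
    Measurable (fun ω => H (gridPt m (gridIdx τ m ω)) ω) :=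
  measurable_nat_eval (f := fun n => H (gridPt m n))
    (fun n => (hH (gridPt m n)).mono (hle _) le_rfl) (measurable_gridIdx hle hτ m)

lemma supermart_comp {μ : Measure Ω}
    {𝔉 : ℝ≥0 → MeasurableSpace Ω} (hle : ∀ t, 𝔉 t ≤ m0) (hmono : Monotone 𝔉)
    {G : ℝ≥0 → Ω → ℝ} (hGad : ∀ t, Measurable[𝔉 t] (G t))
    (hGint : ∀ t, Integrable (G t) μ)
    (hGsm : ∀ s t : ℝ≥0, s ≤ t → μ[G t | 𝔉 s] ≤ᵐ[μ] G s)
    (T : ℕ → ℝ≥0) (hT : Monotone T) :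
    Supermartingale (fun n => G (T n))
      (⟨fun n => 𝔉 (T n), fun _ _ h => hmono (hT h), fun _ => hle _⟩ : Filtration ℕ m0) μ :=
  ⟨fun n => (hGad (T n)).stronglyMeasurable, fun _ _ h => hGsm _ _ (hT h), fun _ => hGint _⟩

lemma integral_gridEval_le {μ : Measure Ω} [IsProbabilityMeasure μ]
    {𝔉 : ℝ≥0 → MeasurableSpace Ω} (hle : ∀ t, 𝔉 t ≤ m0) (hmono : Monotone 𝔉)
    {G : ℝ≥0 → Ω → ℝ} (hGad : ∀ t, Measurable[𝔉 t] (G t))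
    (hGint : ∀ t, Integrable (G t) μ)
    (hGsm : ∀ s t : ℝ≥0, s ≤ t → μ[G t | 𝔉 s] ≤ᵐ[μ] G s)
    {τ : Ω → ℝ≥0∞} (hτ : IsStoppingTimeE 𝔉 τ) (m : ℕ) :
    Integrable (fun ω => G (gridPt m (gridIdx τ m ω)) ω) μ ∧
    ∫ ω, G (gridPt m (gridIdx τ m ω)) ω ∂μ ≤ ∫ ω, G 0 ω ∂μ := by
  have hs := (supermart_comp hle hmono hGad hGint hGsm (gridPt m) (gridPt_mono m)).neg
  set 𝒢 : Filtration ℕ m0 :=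
    ⟨fun n => 𝔉 (gridPt m n), fun _ _ h => hmono (gridPt_mono m h), fun _ => hle _⟩
  set π : Ω → WithTop ℕ := fun ω => (gridIdx τ m ω : WithTop ℕ) with hπdef
  have hπ : IsStoppingTime 𝒢 π := by
    intro j
    have := gridIdx_meas hτ m j
    simpa [hπdef] using this
  have hb : ∀ ω, π ω ≤ (m * 2 ^ m : ℕ) := fun ω => by
    simp only [hπdef]
    exact_mod_cast gridIdx_le τ m ω
  have hz : IsStoppingTime 𝒢 (fun _ => ((0 : ℕ) : WithTop ℕ)) := isStoppingTime_const 𝒢 0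
  have hmain := hs.expected_stoppedValue_mono hz hπ (fun ω => zero_le) hb
  have hint := hs.integrable_stoppedValue hπ hb
  have hev : stoppedValue (-fun n => G (gridPt m n)) π
      = fun ω => - G (gridPt m (gridIdx τ m ω)) ω := by
    rfl
  have hev0 : stoppedValue (-fun n => G (gridPt m n)) (fun _ => ((0 : ℕ) : WithTop ℕ))
      = fun ω => - G (gridPt m 0) ω := by
    rfl
  rw [hev] at hmain hint
  refine ⟨by simpa using hint.neg, ?_⟩
  rw [hev0] at hmain
  have h0 : gridPt m 0 = 0 := by simp [gridPt]
  simp only [h0, integral_neg] at hmain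
  linarith

/-- Increasing enumeration of `⋃ k, {k + j 2^{-M k} : 0 ≤ j < 2^{M k}}`. -/
def enumT (M : ℕ → ℕ) : ℕ → ℝ≥0
  | 0 => 0
  | n + 1 => enumT M n + (1 / 2) ^ (M ⌊enumT M n⌋₊)

lemma enumT_mono (M : ℕ → ℕ) : Monotone (enumT M) :=
  monotone_nat_of_le_succ fun n => by
    rw [enumT]
    exact le_self_add

lemma enumT_le (M : ℕ → ℕ) (n : ℕ) : enumT M n ≤ n := by
  induction n with
  | zero => simp [enumT]
  | succ n ih =>
    rw [enumT]
    push_cast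
    gcongr
    exact pow_le_one₀ (by positivity) (by norm_num)

lemma enumT_block (M : ℕ → ℕ) {n k : ℕ} (h : enumT M n = k) (j : ℕ) (hj : j ≤ 2 ^ M k) :
    enumT M (n + j) = k + (j : ℝ≥0) / 2 ^ M k := by
  induction j with
  | zero => simp [h]
  | succ j ih =>
    have ih' := ih (by omega)
    have hlt : (j : ℝ≥0) / 2 ^ M k < 1 := by
      rw [div_lt_one (by positivity)]
      have : j < 2 ^ M k := by omega
      exact_mod_cast this
    have hfl : ⌊enumT M (n + j)⌋₊ = k := by
      rw [ih', Nat.floor_eq_iff (by positivity)]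
      exact ⟨le_self_add, by gcongr⟩
    rw [← add_assoc, enumT, hfl, ih']
    push_cast
    rw [add_assoc, add_div, div_pow, one_pow]

lemma enumT_nat (M : ℕ → ℕ) (k : ℕ) : ∃ n, enumT M n = k := by
  induction k with
  | zero => exact ⟨0, by simp [enumT]⟩
  | succ k ih =>
    obtain ⟨n, hn⟩ := ih
    refine ⟨n + 2 ^ M k, ?_⟩
    rw [enumT_block M hn _ le_rfl]
    push_cast
    rw [div_self (by positivity)]

lemma le_of_enumT (M : ℕ → ℕ) {n k : ℕ} (h : (k : ℝ≥0) ≤ enumT M n) : k ≤ n := by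
  exact_mod_cast h.trans (enumT_le M n)

lemma enumT_grid (M : ℕ → ℕ) (k p : ℕ) (h : ⌊gridPt (M k) p⌋₊ = k) :
    ∃ n, k ≤ n ∧ enumT M n = gridPt (M k) p := by
  obtain ⟨n, hn⟩ := enumT_nat M k
  rw [Nat.floor_eq_iff (by positivity), gridPt, le_div_iff₀ (by positivity),
    div_lt_iff₀ (by positivity)] at h
  have h1 : k * 2 ^ M k ≤ p := by exact_mod_cast h.1
  have h2 : p < (k + 1) * 2 ^ M k := by exact_mod_cast h.2
  obtain ⟨j, rfl⟩ := Nat.exists_eq_add_of_le h1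
  have hj : j ≤ 2 ^ M k := by
    rw [add_mul] at h2
    omega
  have he : enumT M (n + j) = gridPt (M k) (k * 2 ^ M k + j) := by
    rw [enumT_block M hn j hj, gridPt]
    push_cast
    rw [add_div, mul_div_assoc, div_self (by positivity), mul_one]
  refine ⟨n + j, ?_, he⟩
  apply le_of_enumT M
  rw [enumT_block M hn j hj]
  exact le_self_add

/-- The event that the process exceeds `q` on the grid of mesh `2^{-m}` in block `k`. -/
def exceedGrid (G : ℝ≥0 → Ω → ℝ) (q : ℝ) (k m : ℕ) : Set Ω :=
  ⋃ p, ⋃ (_ : ⌊gridPt m p⌋₊ = k), {ω | q < G (gridPt m p) ω}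

lemma mem_exceedGrid {G : ℝ≥0 → Ω → ℝ} {q : ℝ} {k m : ℕ} {ω : Ω} :
    ω ∈ exceedGrid G q k m ↔ ∃ p, ⌊gridPt m p⌋₊ = k ∧ q < G (gridPt m p) ω := by
  simp [exceedGrid]

lemma gridPt_refine {m n : ℕ} (h : m ≤ n) (p : ℕ) : gridPt n (p * 2 ^ (n - m)) = gridPt m p := by
  obtain ⟨d, rfl⟩ := Nat.exists_eq_add_of_le h
  unfold gridPt
  rw [Nat.add_sub_cancel_left]
  push_cast
  rw [pow_add, mul_div_mul_right _ _ (by positivity)]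

lemma exceedGrid_mono (G : ℝ≥0 → Ω → ℝ) (q : ℝ) (k : ℕ) : Monotone (exceedGrid G q k) := by
  intro m n h ω hω
  rw [mem_exceedGrid] at *
  obtain ⟨p, hp⟩ := hω
  refine ⟨p * 2 ^ (n - m), ?_⟩
  rwa [gridPt_refine h]

lemma exceedGrid_meas {G : ℝ≥0 → Ω → ℝ} (hG : ∀ t, Measurable (G t)) (q : ℝ) (k m : ℕ) :
    MeasurableSet (exceedGrid G q k m) :=
  MeasurableSet.iUnion fun p => MeasurableSet.iUnion fun _ =>
    measurableSet_lt measurable_const (hG _)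

lemma exceedGrid_tendsto {μ : Measure Ω} [IsProbabilityMeasure μ] {G : ℝ≥0 → Ω → ℝ}
    (hG : ∀ t, Measurable (G t)) (q : ℝ) (k : ℕ) :
    Tendsto (fun m => μ ((⋃ n, exceedGrid G q k n) \ exceedGrid G q k m)) atTop (nhds 0) := by
  have hanti : Antitone (fun m => (⋃ n, exceedGrid G q k n) \ exceedGrid G q k m) :=
    fun a b h => diff_subset_diff_right (exceedGrid_mono G q k h)
  have h := tendsto_measure_iInter_atTop (μ := μ)
    (fun m => ((MeasurableSet.iUnion fun n => exceedGrid_meas hG q k n).diff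
      (exceedGrid_meas hG q k m)).nullMeasurableSet) hanti ⟨0, measure_ne_top _ _⟩
  have he : (⋂ m, (⋃ n, exceedGrid G q k n) \ exceedGrid G q k m) = ∅ := by
    rw [← diff_iUnion, diff_self]
  rwa [he, measure_empty] at h

lemma exists_levels {μ : Measure Ω} [IsProbabilityMeasure μ] {G : ℝ≥0 → Ω → ℝ}
    (hG : ∀ t, Measurable (G t)) (e : ℕ → ℚ) :
    ∃ M : ℕ → ℕ, ∀ᵐ ω ∂μ, ∀ i, ∀ᶠ k in atTop, ω ∈ (⋃ n, exceedGrid G (e i) k n) →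
      ω ∈ exceedGrid G (e i) k (M k) := by
  have h1 : ∀ k : ℕ, ∃ m, ∀ i ∈ Finset.range k,
      μ ((⋃ n, exceedGrid G (e i) k n) \ exceedGrid G (e i) k m) ≤ (1 / 2) ^ k := by
    intro k
    have : ∀ᶠ m in atTop, ∀ i ∈ Finset.range k,
      μ ((⋃ n, exceedGrid G (e i) k n) \ exceedGrid G (e i) k m) ≤ (1 / 2) ^ k := by
      rw [Filter.eventually_all_finset]
      intro i _
      have hpos : (0 : ℝ≥0∞) < (1 / 2) ^ k := ENNReal.pow_pos (by norm_num) k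
      exact (exceedGrid_tendsto hG (e i) k).eventually (ge_mem_nhds hpos)
    exact this.exists
  choose M hM using h1
  refine ⟨M, ae_all_iff.2 fun i => ?_⟩
  set s : ℕ → Set Ω := fun k => if i < k then
    (⋃ n, exceedGrid G (e i) k n) \ exceedGrid G (e i) k (M k) else ∅ with hs
  have hsum : (∑' k, μ (s k)) ≠ ∞ := by
    have hle : ∀ k, μ (s k) ≤ (1 / 2 : ℝ≥0∞) ^ k := by
      intro k
      by_cases hk : i < k
      · simp only [hs, hk, if_true]
        exact hM k i (Finset.mem_range.2 hk)
      · simp [hs, hk]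
    refine ne_top_of_le_ne_top ?_ (ENNReal.tsum_le_tsum hle)
    rw [ENNReal.tsum_geometric]
    simp
  filter_upwards [ae_eventually_notMem hsum] with ω hω
  filter_upwards [hω, eventually_gt_atTop i] with k hk hik hU
  by_contra hcon
  apply hk
  simp only [hs, hik, if_true]
  exact ⟨hU, hcon⟩

lemma ae_limit {μ : Measure Ω} [IsProbabilityMeasure μ]
    {𝔉 : ℝ≥0 → MeasurableSpace Ω} (hle : ∀ t, 𝔉 t ≤ m0) (hmono : Monotone 𝔉)
    {G : ℝ≥0 → Ω → ℝ} (hGpos : ∀ t ω, 0 ≤ G t ω)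
    (hGrc : ∀ ω t, ContinuousWithinAt (fun s => G s ω) (Set.Ici t) t)
    (hGad : ∀ t, Measurable[𝔉 t] (G t))
    (hGint : ∀ t, Integrable (G t) μ)
    (hGsm : ∀ s t : ℝ≥0, s ≤ t → μ[G t | 𝔉 s] ≤ᵐ[μ] G s)
    (hGbdd : ∃ C : ℝ, ∀ t : ℝ≥0, ∫ ω, G t ω ∂μ ≤ C) :
    ∀ᵐ ω ∂μ, ∃ x : ℝ, Tendsto (fun n : ℕ => G (n : ℝ≥0) ω) atTop (nhds x) ∧
      ∀ c > x, ∀ᶠ t in atTop, G t ω ≤ c := by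
  have hGm : ∀ t, Measurable (G t) := fun t => (hGad t).mono (hle t) le_rfl
  obtain ⟨e, he⟩ := exists_surjective_nat ℚ
  obtain ⟨M, hM⟩ := exists_levels (μ := μ) hGm e
  obtain ⟨C, hC⟩ := hGbdd
  have hsub := (supermart_comp hle hmono hGad hGint hGsm (enumT M) (enumT_mono M)).neg
  have hconv := hsub.exists_ae_tendsto_of_bdd (R := C.toNNReal) (by
    intro n
    have h1 : eLpNorm ((-fun n => G (enumT M n)) n) 1 μ = eLpNorm (G (enumT M n)) 1 μ :=
      eLpNorm_neg (G (enumT M n)) 1 μ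
    rw [h1, eLpNorm_one_eq_lintegral_enorm]
    have h2 : ∫⁻ ω, ‖G (enumT M n) ω‖ₑ ∂μ = ∫⁻ ω, ENNReal.ofReal (G (enumT M n) ω) ∂μ :=
      lintegral_congr fun ω => Real.enorm_of_nonneg (hGpos _ _)
    rw [h2, ← ofReal_integral_eq_lintegral_ofReal (hGint _) (ae_of_all _ (hGpos _))]
    exact ENNReal.ofReal_le_ofReal (hC _))
  filter_upwards [hM, hconv] with ω hω hc
  obtain ⟨y, hy⟩ := hc
  have hx : Tendsto (fun n => G (enumT M n) ω) atTop (nhds (-y)) := by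
    simpa using hy.neg
  refine ⟨-y, ?_, ?_⟩
  · choose r hr using enumT_nat M
    have hrt : Tendsto r atTop atTop :=
      tendsto_atTop_mono (fun k => le_of_enumT M (hr k).ge) tendsto_id
    have := hx.comp hrt
    refine this.congr fun k => ?_
    simp [hr]
  · intro c hcx
    obtain ⟨q, hq1, hq2⟩ := exists_rat_btwn hcx
    obtain ⟨i, rfl⟩ := he q
    obtain ⟨N, hN⟩ := eventually_atTop.1 (hx.eventually (gt_mem_nhds hq1))
    obtain ⟨K, hK⟩ := eventually_atTop.1 (hω i)
    filter_upwards [eventually_ge_atTop ((max N K : ℕ) : ℝ≥0)] with t ht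
    by_contra hcon
    have hlt : ((e i : ℚ) : ℝ) < G t ω := hq2.trans (not_le.1 hcon)
    obtain ⟨m, p, h1, h2⟩ := exists_gridPt_gt (hGrc ω t) hlt
    set k := ⌊gridPt m p⌋₊ with hk
    have hkge : max N K ≤ k := Nat.le_floor (ht.trans h1.le)
    have hin := hK k ((le_max_right _ _).trans hkge)
      (mem_iUnion.2 ⟨m, mem_exceedGrid.2 ⟨p, hk.symm, h2⟩⟩)
    obtain ⟨p', hp1, hp2⟩ := mem_exceedGrid.1 hin
    obtain ⟨n, hn1, hn2⟩ := enumT_grid M k p' hp1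
    have := hN n (((le_max_left _ _).trans hkge).trans hn1)
    rw [hn2] at this
    exact lt_asymm this hp2

lemma evalAt_nonneg {Y : ℝ≥0 → Ω → ℝ} (hY : ∀ t ω, 0 ≤ Y t ω) (τ : Ω → ℝ≥0∞) (ω : Ω) :
    0 ≤ evalAt Y τ ω := by
  unfold evalAt
  split_ifs with h
  · exact hY _ _
  · rw [limsup_eq]
    refine Real.sInf_nonneg fun a ha => ?_
    obtain ⟨t, ht⟩ := (show ∀ᶠ t in atTop, Y t ω ≤ a from ha).exists
    exact (hY t ω).trans ht

lemma lintegral_evalAt_le {μ : Measure Ω} [IsProbabilityMeasure μ]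
    {𝔉 : ℝ≥0 → MeasurableSpace Ω} (hle : ∀ t, 𝔉 t ≤ m0) (hmono : Monotone 𝔉)
    {G : ℝ≥0 → Ω → ℝ} (hGpos : ∀ t ω, 0 ≤ G t ω)
    (hGrc : ∀ ω t, ContinuousWithinAt (fun s => G s ω) (Set.Ici t) t)
    (hGad : ∀ t, Measurable[𝔉 t] (G t))
    (hGint : ∀ t, Integrable (G t) μ)
    (hGsm : ∀ s t : ℝ≥0, s ≤ t → μ[G t | 𝔉 s] ≤ᵐ[μ] G s)
    (hGbdd : ∃ C : ℝ, ∀ t : ℝ≥0, ∫ ω, G t ω ∂μ ≤ C)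
    {τ : Ω → ℝ≥0∞} (hτ : IsStoppingTimeE 𝔉 τ) :
    ∫⁻ ω, ENNReal.ofReal (evalAt G τ ω) ∂μ ≤ ENNReal.ofReal (∫ ω, G 0 ω ∂μ) := by
  have hpt : ∀ᵐ ω ∂μ, ENNReal.ofReal (evalAt G τ ω) ≤
      liminf (fun m => ENNReal.ofReal (G (gridPt m (gridIdx τ m ω)) ω)) atTop := by
    filter_upwards [ae_limit hle hmono hGpos hGrc hGad hGint hGsm hGbdd] with ω hω
    by_cases h : τ ω = ∞
    · obtain ⟨x, hx, hc⟩ := hω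
      have hl : limsup (fun t : ℝ≥0 => G t ω) atTop ≤ x := by
        refine le_of_forall_gt_imp_ge_of_dense fun c hcx => ?_
        rw [limsup_eq]
        refine csInf_le ⟨0, fun a ha => ?_⟩ (hc c hcx)
        obtain ⟨t, ht⟩ := (show ∀ᶠ t in atTop, G t ω ≤ a from ha).exists
        exact (hGpos t ω).trans ht
      have ht : Tendsto (fun m => ENNReal.ofReal (G (gridPt m (gridIdx τ m ω)) ω)) atTop
          (nhds (ENNReal.ofReal x)) := by
        simp only [gridPt_gridIdx_top h]
        exact (ENNReal.continuous_ofReal.tendsto x).comp hx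
      rw [ht.liminf_eq]
      simp only [evalAt, h, ne_eq, not_true_eq_false, if_false]
      exact ENNReal.ofReal_le_ofReal hl
    · have h1 := (hGrc ω (τ ω).toNNReal).tendsto.comp (gridPt_gridIdx_tendsto h)
      have ht : Tendsto (fun m => ENNReal.ofReal (G (gridPt m (gridIdx τ m ω)) ω)) atTop
          (nhds (ENNReal.ofReal (G (τ ω).toNNReal ω))) :=
        (ENNReal.continuous_ofReal.tendsto _).comp h1
      rw [ht.liminf_eq]
      simp [evalAt, h]
  refine (lintegral_mono_ae hpt).trans ?_
  refine (lintegral_liminf_le fun m => (measurable_gridEval hle hτ hGad m).ennreal_ofReal).trans ?_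
  refine liminf_le_of_le (by isBoundedDefault) fun b hb => ?_
  obtain ⟨m, hm⟩ := hb.exists
  refine hm.trans ?_
  obtain ⟨h1, h2⟩ := integral_gridEval_le hle hmono hGad hGint hGsm hτ m
  rw [← ofReal_integral_eq_lintegral_ofReal h1 (ae_of_all _ fun ω => hGpos _ _)]
  exact ENNReal.ofReal_le_ofReal h2

lemma ofReal_le_grid {F : ℝ≥0 → ℝ} {t : ℝ≥0} (hF : ContinuousWithinAt F (Set.Ici t) t)
    {B : ℝ≥0∞} (hB : ∀ m p, t ≤ gridPt m p → ENNReal.ofReal (F (gridPt m p)) ≤ B) :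
    ENNReal.ofReal (F t) ≤ B := by
  by_contra hcon
  rw [not_le] at hcon
  have hBt : B ≠ ∞ := ne_top_of_lt hcon
  rw [ENNReal.lt_ofReal_iff_toReal_lt hBt] at hcon
  obtain ⟨m, p, h1, h2⟩ := exists_gridPt_gt hF hcon
  rw [← ENNReal.lt_ofReal_iff_toReal_lt hBt] at h2
  exact absurd (hB m p h1.le) (not_le.2 h2)

/-- The supremum of the process over the dyadic points beyond `n`. -/
def supFrom (H : ℝ≥0 → Ω → ℝ) (n : ℕ) (ω : Ω) : ℝ≥0∞ :=
  ⨆ (m : ℕ) (p : ℕ) (_ : (n : ℝ≥0) ≤ gridPt m p), ENNReal.ofReal (H (gridPt m p) ω)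

lemma measurable_supFrom {H : ℝ≥0 → Ω → ℝ} (hH : ∀ t, Measurable (H t)) (n : ℕ) :
    Measurable (supFrom H n) := by
  unfold supFrom
  exact Measurable.iSup fun m => Measurable.iSup fun p => Measurable.iSup fun _ =>
    (hH _).ennreal_ofReal

lemma le_supFrom {H : ℝ≥0 → Ω → ℝ} {ω : Ω}
    (hHrc : ∀ t, ContinuousWithinAt (fun s => H s ω) (Set.Ici t) t) {n : ℕ} {t : ℝ≥0}
    (hn : (n : ℝ≥0) ≤ t) : ENNReal.ofReal (H t ω) ≤ supFrom H n ω := by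
  refine ofReal_le_grid (F := fun s => H s ω) (hHrc t) fun m p hmp => ?_
  exact le_iSup_of_le m (le_iSup_of_le p (le_iSup_of_le (hn.trans hmp) le_rfl))

lemma limsup_eq_supFrom {H : ℝ≥0 → Ω → ℝ} {ω : Ω} (hHpos : ∀ t ω, 0 ≤ H t ω)
    (hHrc : ∀ t, ContinuousWithinAt (fun s => H s ω) (Set.Ici t) t)
    (hfin : supFrom H 0 ω < ∞) :
    limsup (fun t : ℝ≥0 => H t ω) atTop = (⨅ n, supFrom H n ω).toReal := by
  have hbd : ∀ t, H t ω ≤ (supFrom H 0 ω).toReal := fun t =>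
    (ENNReal.ofReal_le_iff_le_toReal hfin.ne).1 (le_supFrom hHrc (by simp))
  have hmap := Monotone.map_limsup_of_continuousAt (F := (atTop : Filter ℝ≥0))
    (f := ENNReal.ofReal) ENNReal.ofReal_mono (fun t => H t ω)
    ENNReal.continuous_ofReal.continuousAt
    (isBoundedUnder_of ⟨_, hbd⟩) (isCoboundedUnder_le_of_le atTop (fun t => hHpos t ω))
  have hL : 0 ≤ limsup (fun t : ℝ≥0 => H t ω) atTop := by
    have := evalAt_nonneg hHpos (fun _ => ∞) ω
    simpa [evalAt] using this
  have hkey : limsup (ENNReal.ofReal ∘ fun t => H t ω) atTop = ⨅ n, supFrom H n ω := by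
    rw [atTop_basis.limsup_eq_iInf_iSup]
    apply le_antisymm
    · refine le_iInf fun n => ?_
      refine (iInf₂_le (n : ℝ≥0) trivial).trans ?_
      exact iSup₂_le fun t ht => le_supFrom hHrc ht
    · refine le_iInf₂ fun a _ => ?_
      obtain ⟨n, hn⟩ := exists_nat_ge a
      refine (iInf_le _ n).trans ?_
      refine iSup_le fun m => iSup_le fun p => iSup_le fun h => ?_
      exact le_iSup₂_of_le (gridPt m p) (hn.trans h) le_rfl
  rw [← hkey, ← hmap, ENNReal.toReal_ofReal hL]

lemma integrable_evalAt {μ : Measure Ω} [IsProbabilityMeasure μ]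
    {𝔉 : ℝ≥0 → MeasurableSpace Ω} (hle : ∀ t, 𝔉 t ≤ m0)
    {H : ℝ≥0 → Ω → ℝ} (hHpos : ∀ t ω, 0 ≤ H t ω)
    (hHrc : ∀ ω t, ContinuousWithinAt (fun s => H s ω) (Set.Ici t) t)
    (hHad : ∀ t, Measurable[𝔉 t] (H t))
    (hHint : ∫⁻ ω, ⨆ t : ℝ≥0, ENNReal.ofReal (H t ω) ∂μ < ∞)
    {τ : Ω → ℝ≥0∞} (hτ : IsStoppingTimeE 𝔉 τ) : Integrable (evalAt H τ) μ := by
  have hHm : ∀ t, Measurable (H t) := fun t => (hHad t).mono (hle t) le_rfl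
  have hS : ∫⁻ ω, supFrom H 0 ω ∂μ ≠ ∞ := by
    refine ne_top_of_le_ne_top hHint.ne (lintegral_mono fun ω => ?_)
    exact iSup_le fun m => iSup_le fun p => iSup_le fun _ =>
      le_iSup (fun t => ENNReal.ofReal (H t ω)) (gridPt m p)
  have hfin : ∀ᵐ ω ∂μ, supFrom H 0 ω < ∞ := ae_lt_top (measurable_supFrom hHm 0) hS
  have htop : MeasurableSet {ω | τ ω = ∞} := by
    have : {ω | τ ω = ∞} = ⋂ n : ℕ, {ω | τ ω ≤ ((n : ℝ≥0) : ℝ≥0∞)}ᶜ := by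
      ext ω
      simp only [mem_setOf_eq, mem_iInter, mem_compl_iff, not_le]
      constructor
      · intro h n
        rw [h]
        exact ENNReal.coe_lt_top
      · intro h
        by_contra hne
        obtain ⟨n, hn⟩ := ENNReal.exists_nat_gt hne
        exact lt_asymm hn (by simpa using h n)
    rw [this]
    exact MeasurableSet.iInter fun n => (hle _ _ (hτ n)).compl
  have hmeas : AEMeasurable (evalAt H τ) μ := by
    classical
    refine aemeasurable_of_tendsto_metrizable_ae atTop
      (f := fun m ω => if τ ω = ∞ then (⨅ n, supFrom H n ω).toReal
        else H (gridPt m (gridIdx τ m ω)) ω) (fun m => ?_) ?_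
    · exact (Measurable.ite htop (Measurable.iInf fun n => measurable_supFrom hHm n).ennreal_toReal
        (measurable_gridEval hle hτ hHad m)).aemeasurable
    · filter_upwards [hfin] with ω hω
      by_cases h : τ ω = ∞
      · simp only [evalAt, h, if_true, ne_eq, not_true_eq_false, if_false]
        rw [limsup_eq_supFrom hHpos (hHrc ω) hω]
        exact tendsto_const_nhds
      · simp only [evalAt, h, if_false, ne_eq, not_false_eq_true, if_true]
        exact (hHrc ω (τ ω).toNNReal).tendsto.comp (gridPt_gridIdx_tendsto h)
  refine (integrable_toReal_of_lintegral_ne_top (measurable_supFrom hHm 0).aemeasurable hS).mono'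
    hmeas.aestronglyMeasurable ?_
  filter_upwards [hfin] with ω hω
  rw [Real.norm_of_nonneg (evalAt_nonneg hHpos τ ω)]
  have hbd : ∀ t, H t ω ≤ (supFrom H 0 ω).toReal := fun t =>
    (ENNReal.ofReal_le_iff_le_toReal hω.ne).1 (le_supFrom (hHrc ω) (by simp))
  by_cases h : τ ω = ∞
  · simp only [evalAt, h, ne_eq, not_true_eq_false, if_false]
    exact limsup_le_of_le (isCoboundedUnder_le_of_le atTop (fun t => hHpos t ω))
      (Eventually.of_forall hbd)
  · simp only [evalAt, h, ne_eq, not_false_eq_true, if_true]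
    exact hbd _

/-- If `H` is a nonnegative right-continuous adapted process with
integrable supremum, `G` is a nonnegative right-continuous adapted supermartingale with
bounded expectations, `H(0) = h₀` and `G(0) = g₀` a.s. are constants, and
`sup_τ 𝔼(H(τ)) = h₀`, then `sup_τ 𝔼(H(τ) + G(τ)) = h₀ + g₀` (sup over all `𝔉`-stopping
times with values in `[0,∞]`). -/
theorem stopping_set_subset_lemma
    (μ : Measure Ω) [IsProbabilityMeasure μ]
    (𝔉 : ℝ≥0 → MeasurableSpace Ω) (hle : ∀ t, 𝔉 t ≤ m0) (hmono : Monotone 𝔉)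
    (hrc : RightContinuousFilt 𝔉)
    (hnull : ∀ A : Set Ω, μ A = 0 → MeasurableSet[𝔉 0] A)
    (H G : ℝ≥0 → Ω → ℝ)
    (hHpos : ∀ t ω, 0 ≤ H t ω) (hGpos : ∀ t ω, 0 ≤ G t ω)
    (hHrc : ∀ ω t, ContinuousWithinAt (fun s => H s ω) (Set.Ici t) t)
    (hGrc : ∀ ω t, ContinuousWithinAt (fun s => G s ω) (Set.Ici t) t)
    (hHad : ∀ t, Measurable[𝔉 t] (H t)) (hGad : ∀ t, Measurable[𝔉 t] (G t))
    (hHint : ∫⁻ ω, ⨆ t : ℝ≥0, ENNReal.ofReal (H t ω) ∂μ < ∞)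
    (hGint : ∀ t, Integrable (G t) μ)
    (hGsm : ∀ s t : ℝ≥0, s ≤ t → μ[G t | 𝔉 s] ≤ᵐ[μ] G s)
    (hGbdd : ∃ C : ℝ, ∀ t : ℝ≥0, ∫ ω, G t ω ∂μ ≤ C)
    (h₀ g₀ : ℝ)
    (hH0 : ∀ᵐ ω ∂μ, H 0 ω = h₀) (hG0 : ∀ᵐ ω ∂μ, G 0 ω = g₀)
    (hopt : IsLUB {r : ℝ | ∃ τ : Ω → ℝ≥0∞, IsStoppingTimeE 𝔉 τ ∧
      r = ∫ ω, evalAt H τ ω ∂μ} h₀) :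
    IsLUB {r : ℝ | ∃ τ : Ω → ℝ≥0∞, IsStoppingTimeE 𝔉 τ ∧
      r = ∫ ω, (evalAt H τ ω + evalAt G τ ω) ∂μ} (h₀ + g₀) := by
  have hh : 0 ≤ h₀ := by
    obtain ⟨ω, hω⟩ := hH0.exists
    exact hω ▸ hHpos 0 ω
  have hg : 0 ≤ g₀ := by
    obtain ⟨ω, hω⟩ := hG0.exists
    exact hω ▸ hGpos 0 ω
  have hG0i : ∫ ω, G 0 ω ∂μ = g₀ := by
    rw [integral_congr_ae hG0]
    simp
  constructor
  · rintro r ⟨τ, hτ, rfl⟩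
    by_cases hint : Integrable (fun ω => evalAt H τ ω + evalAt G τ ω) μ
    · have hHi := integrable_evalAt hle hHpos hHrc hHad hHint hτ
      have hGi : Integrable (evalAt G τ) μ := by
        have h := hint.sub hHi
        refine h.congr (ae_of_all _ fun ω => ?_)
        simp
      rw [integral_add hHi hGi]
      refine add_le_add (hopt.1 ⟨τ, hτ, rfl⟩) ?_
      have h1 := lintegral_evalAt_le hle hmono hGpos hGrc hGad hGint hGsm hGbdd hτ
      rw [hG0i, ← ofReal_integral_eq_lintegral_ofReal hGi
        (ae_of_all _ fun ω => evalAt_nonneg hGpos τ ω)] at h1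
      exact (ENNReal.ofReal_le_ofReal_iff hg).1 h1
    · rw [integral_undef hint]
      positivity
  · intro b hb
    refine hb ⟨fun _ => 0, fun t => by simp, ?_⟩
    have : (fun ω => evalAt H (fun _ => 0) ω + evalAt G (fun _ => 0) ω)
        =ᵐ[μ] fun _ => h₀ + g₀ := by
      filter_upwards [hH0, hG0] with ω h1 h2
      simp [evalAt, h1, h2]
    rw [integral_congr_ae this]
    simp

end
end

section
/- In the second model, the process Y_n := Y + Z̄^{B,r}_{n−1} is 𝔉-adapted and right-continuous, and for every 𝔉-stopping time σ it holds a.s. that Z_n^B(σ) = esssup over 𝔉-stopping times τ ≥ σ of 𝔼(Y_n(τ) | 𝓕_σ). -/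
open MeasureTheory Set Filter
open scoped ENNReal NNReal

noncomputable section

variable {Ω : Type*}

variable {m0 : MeasurableSpace Ω}

open scoped Topology

/-- Evaluation at a random time with prescribed terminal value. -/
def evI (V : ℝ≥0 → Ω → ℝ) (Vi : Ω → ℝ) (τ : Ω → ℝ≥0∞) (ω : Ω) : ℝ :=
  if τ ω ≠ ∞ then V (τ ω).toNNReal ω else Vi ω

lemma measurableSet_sigmaAt {𝔉 : ℝ≥0 → MeasurableSpace Ω} {σ : Ω → ℝ≥0∞}
    (hσ : IsStoppingTimeE 𝔉 σ) {A : Set Ω} :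
    MeasurableSet[sigmaAt 𝔉 σ] A ↔ ∀ t : ℝ≥0, MeasurableSet[𝔉 t] (A ∩ {ω | σ ω ≤ t}) := by
  constructor
  · intro h
    induction h with
    | basic u hu => exact hu
    | empty => intro t; simp
    | compl u _ ih =>
      intro t
      have : uᶜ ∩ {ω | σ ω ≤ t} = {ω | σ ω ≤ t} \ (u ∩ {ω | σ ω ≤ t}) := by
        ext ω; simp; tauto
      rw [this]
      exact MeasurableSet.diff (hσ t) (ih t)
    | iUnion f _ ih =>
      intro t
      rw [iUnion_inter]
      exact MeasurableSet.iUnion fun i => ih i t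
  · intro h
    exact MeasurableSpace.measurableSet_generateFrom h

lemma stop_lt {𝔉 : ℝ≥0 → MeasurableSpace Ω} (hmono : Monotone 𝔉) {σ : Ω → ℝ≥0∞}
    (hσ : IsStoppingTimeE 𝔉 σ) (t : ℝ≥0) : MeasurableSet[𝔉 t] {ω | σ ω < t} := by
  rcases eq_or_lt_of_le (show 0 ≤ t from t.2) with rfl | ht
  · simp
  obtain ⟨u, -, hu, hu'⟩ := exists_seq_strictMono_tendsto' ht
  have : {ω | σ ω < t} = ⋃ n, {ω | σ ω ≤ u n} := by
    ext ω
    simp only [mem_ofPred_eq, mem_iUnion]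
    constructor
    · intro h
      have h2 : Tendsto (fun n => (u n : ℝ≥0∞)) atTop (𝓝 (t : ℝ≥0∞)) :=
        ENNReal.tendsto_coe.2 hu'
      obtain ⟨n, hn⟩ := (h2.eventually (lt_mem_nhds h)).exists
      exact ⟨n, hn.le⟩
    · rintro ⟨n, hn⟩
      exact hn.trans_lt (ENNReal.coe_lt_coe.2 (hu n).2)
  rw [this]
  exact MeasurableSet.iUnion fun n => hmono (hu n).2.le _ (hσ (u n))

lemma stop_of_lt {𝔉 : ℝ≥0 → MeasurableSpace Ω} (hmono : Monotone 𝔉)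
    (hrc : RightContinuousFilt 𝔉) {σ : Ω → ℝ≥0∞}
    (h : ∀ t : ℝ≥0, MeasurableSet[𝔉 t] {ω | σ ω < t}) : IsStoppingTimeE 𝔉 σ := by
  intro t
  rw [hrc t]
  simp only [MeasurableSpace.measurableSet_iInf]
  intro s hs
  obtain ⟨u, -, hu, hu'⟩ := exists_seq_strictAnti_tendsto' (mem_Ioi.1 hs)
  have : {ω | σ ω ≤ t} = ⋂ n, {ω | σ ω < u n} := by
    ext ω
    simp only [mem_ofPred_eq, mem_iInter]
    constructor
    · intro h n
      exact h.trans_lt (ENNReal.coe_lt_coe.2 (hu n).1)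
    · intro h
      have h2 : Tendsto (fun n => (u n : ℝ≥0∞)) atTop (𝓝 (t : ℝ≥0∞)) :=
        ENNReal.tendsto_coe.2 hu'
      exact ge_of_tendsto' h2 fun n => (h n).le
  rw [this]
  exact MeasurableSet.iInter fun n => hmono (hu n).2.le _ (h (u n))

lemma stop_max {𝔉 : ℝ≥0 → MeasurableSpace Ω} {σ τ : Ω → ℝ≥0∞}
    (hσ : IsStoppingTimeE 𝔉 σ) (hτ : IsStoppingTimeE 𝔉 τ) :
    IsStoppingTimeE 𝔉 (fun ω => max (σ ω) (τ ω)) := by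
  intro t
  simp only [max_le_iff, ofPred_and]
  exact MeasurableSet.inter (hσ t) (hτ t)

lemma stop_top (𝔉 : ℝ≥0 → MeasurableSpace Ω) : IsStoppingTimeE 𝔉 (fun _ => ∞) := by
  intro t
  simp

lemma stop_const (𝔉 : ℝ≥0 → MeasurableSpace Ω) (c : ℝ≥0∞) :
    IsStoppingTimeE 𝔉 (fun _ => c) := by
  intro t
  by_cases h : c ≤ t <;> simp [h]

lemma stop_glue {𝔉 : ℝ≥0 → MeasurableSpace Ω} {ι : Type*} [Countable ι] (J : Ω → ι)
    (π T : ι → Ω → ℝ≥0∞) (hT : ∀ i, IsStoppingTimeE 𝔉 (T i))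
    (hP : ∀ i (t : ℝ≥0), MeasurableSet[𝔉 t] ({ω | J ω = i} ∩ {ω | π i ω ≤ t}))
    (hle : ∀ i ω, J ω = i → π i ω ≤ T i ω) :
    IsStoppingTimeE 𝔉 (fun ω => T (J ω) ω) := by
  intro t
  have : {ω | T (J ω) ω ≤ t} =
      ⋃ i, (({ω | J ω = i} ∩ {ω | π i ω ≤ t}) ∩ {ω | T i ω ≤ t}) := by
    ext ω
    simp only [mem_ofPred_eq, mem_iUnion, mem_inter_iff]
    constructor
    · intro h
      exact ⟨J ω, ⟨rfl, (hle _ ω rfl).trans h⟩, h⟩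
    · rintro ⟨i, ⟨rfl, -⟩, h⟩
      exact h
  rw [this]
  exact MeasurableSet.iUnion fun i => MeasurableSet.inter (hP i t) (hT i t)

lemma hit_congr (X : ℝ≥0 → Ω → ℝ) (B : Set ℝ) {τ τ' : Ω → ℝ≥0∞} {ω : Ω} (h : τ ω = τ' ω) :
    hitAfterE X B τ ω = hitAfterE X B τ' ω := by
  simp only [hitAfterE, h]

lemma hit_lt_iff (X : ℝ≥0 → Ω → ℝ) (B : Set ℝ) (τ : Ω → ℝ≥0∞) (ω : Ω) (c : ℝ≥0∞) :
    hitAfterE X B τ ω < c ↔ ∃ u : ℝ≥0, τ ω < u ∧ X u ω ∈ B ∧ (u : ℝ≥0∞) < c := by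
  simp only [hitAfterE, iInf_lt_iff, mem_ofPred_eq, exists_prop, and_assoc]

lemma le_hit (X : ℝ≥0 → Ω → ℝ) (B : Set ℝ) (τ : Ω → ℝ≥0∞) (ω : Ω) :
    τ ω ≤ hitAfterE X B τ ω := by
  by_contra h
  rw [not_le, hit_lt_iff] at h
  obtain ⟨u, h1, -, h2⟩ := h
  exact absurd h1 (not_lt.2 h2.le)

lemma hit_mono (X : ℝ≥0 → Ω → ℝ) (B : Set ℝ) {τ τ' : Ω → ℝ≥0∞} {ω : Ω} (h : τ ω ≤ τ' ω) :
    hitAfterE X B τ ω ≤ hitAfterE X B τ' ω := by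
  by_contra h'
  rw [not_le, hit_lt_iff] at h'
  obtain ⟨u, h1, h3, h2⟩ := h'
  exact absurd ((hit_lt_iff X B τ ω _).2 ⟨u, h.trans_lt h1, h3, h2⟩) (lt_irrefl _)

lemma hit_top (X : ℝ≥0 → Ω → ℝ) (B : Set ℝ) {τ : Ω → ℝ≥0∞} {ω : Ω} (h : τ ω = ∞) :
    hitAfterE X B τ ω = ∞ := by
  have := le_hit X B τ ω
  rw [h] at this
  exact top_le_iff.1 this

lemma hit_tendsto (X : ℝ≥0 → Ω → ℝ) (B : Set ℝ) {τ : Ω → ℝ≥0∞} {d : ℕ → Ω → ℝ≥0∞} {ω : Ω}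
    (hle : ∀ k, τ ω ≤ d k ω) (h : Tendsto (fun k => d k ω) atTop (𝓝 (τ ω))) :
    Tendsto (fun k => hitAfterE X B (d k) ω) atTop (𝓝 (hitAfterE X B τ ω)) := by
  rw [tendsto_order]
  constructor
  · intro a ha
    exact Eventually.of_forall fun k => ha.trans_le (hit_mono X B (hle k))
  · intro c hc
    obtain ⟨u, h1, h3, h2⟩ := (hit_lt_iff X B τ ω c).1 hc
    filter_upwards [h.eventually (gt_mem_nhds h1)] with k hk
    exact (hit_lt_iff X B _ ω c).2 ⟨u, hk, h3, h2⟩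

lemma stop_hit {𝔉 : ℝ≥0 → MeasurableSpace Ω} (hmono : Monotone 𝔉)
    (hrc : RightContinuousFilt 𝔉) (X : ℝ≥0 → Ω → ℝ) (B : Set ℝ)
    (hhit : ∀ s : ℝ≥0, IsStoppingTimeE 𝔉 (hitAfterE X B (fun _ => (s : ℝ≥0∞))))
    {τ : Ω → ℝ≥0∞} (hτ : IsStoppingTimeE 𝔉 τ) : IsStoppingTimeE 𝔉 (hitAfterE X B τ) := by
  apply stop_of_lt hmono hrc
  intro t
  have : {ω | hitAfterE X B τ ω < t} =
      ⋃ q : {q : ℚ≥0 // (q : ℝ≥0) ≤ t}, ({ω | τ ω ≤ ((q : ℚ≥0) : ℝ≥0)} ∩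
        {ω | hitAfterE X B (fun _ => (((q : ℚ≥0) : ℝ≥0) : ℝ≥0∞)) ω < t}) := by
    ext ω
    simp only [mem_ofPred_eq, mem_iUnion, mem_inter_iff]
    constructor
    · intro h
      obtain ⟨u, h1, h3, h2⟩ := (hit_lt_iff X B τ ω _).1 h
      lift τ ω to ℝ≥0 using h1.ne_top with r hr
      rw [ENNReal.coe_lt_coe] at h1 h2
      obtain ⟨q, hq1, hq2⟩ := exists_rat_btwn (NNReal.coe_lt_coe.2 h1)
      have hq0 : 0 ≤ q := by
        have : (0 : ℝ) ≤ q := r.2.trans hq1.le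
        exact_mod_cast this
      lift q to ℚ≥0 using hq0
      have hq1' : r < (q : ℝ≥0) := by
        rw [← NNReal.coe_lt_coe]; exact_mod_cast hq1
      have hq2' : (q : ℝ≥0) < u := by
        rw [← NNReal.coe_lt_coe]; exact_mod_cast hq2
      refine ⟨⟨q, (hq2'.trans h2).le⟩, ENNReal.coe_le_coe.2 hq1'.le, ?_⟩
      exact (hit_lt_iff X B _ ω _).2 ⟨u, ENNReal.coe_lt_coe.2 hq2', h3, ENNReal.coe_lt_coe.2 h2⟩
    · rintro ⟨q, h1, h2⟩
      exact lt_of_le_of_lt (hit_mono X B h1) h2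
  rw [this]
  exact MeasurableSet.iUnion fun q => MeasurableSet.inter (hmono q.2 _ (hτ _))
    (stop_lt hmono (hhit _) t)

/-- Dyadic discretization from above. -/
def dyp (k i : ℕ) : ℝ≥0 := (i + 1) / 2 ^ k

/-- Index of the discretization. -/
def disIdx (k : ℕ) (τ : Ω → ℝ≥0∞) (ω : Ω) : Option ℕ :=
  if τ ω = ∞ then none else some ⌊2 ^ k * (τ ω).toNNReal⌋₊

/-- Value of the discretization. -/
def disV (k : ℕ) : Option ℕ → ℝ≥0∞
  | none => ∞
  | some i => (dyp k i : ℝ≥0∞)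

/-- Discretized time. -/
def dis (k : ℕ) (τ : Ω → ℝ≥0∞) (ω : Ω) : ℝ≥0∞ := disV k (disIdx k τ ω)

lemma disIdx_none {k : ℕ} {τ : Ω → ℝ≥0∞} {ω : Ω} : disIdx k τ ω = none ↔ τ ω = ∞ := by
  unfold disIdx; split_ifs with h <;> simp [h]

lemma disIdx_some {k i : ℕ} {τ : Ω → ℝ≥0∞} {ω : Ω} : disIdx k τ ω = some i ↔
    (((i / 2 ^ k : ℝ≥0) : ℝ≥0∞) ≤ τ ω ∧ τ ω < dyp k i) := by
  unfold disIdx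
  split_ifs with h
  · simp [h]
  · lift τ ω to ℝ≥0 using h with r
    have hp : (0 : ℝ≥0) < 2 ^ k := by positivity
    rw [ENNReal.coe_le_coe, ENNReal.coe_lt_coe, dyp, div_le_iff₀ hp, lt_div_iff₀ hp]
    simp only [Option.some.injEq, ENNReal.toNNReal_coe]
    rw [Nat.floor_eq_iff (by positivity), mul_comm]

lemma le_dis (k : ℕ) (τ : Ω → ℝ≥0∞) (ω : Ω) : τ ω ≤ dis k τ ω := by
  unfold dis
  rcases h : disIdx k τ ω with _ | i
  · simp [disV]
  · exact (disIdx_some.1 h).2.le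

lemma dis_le (k : ℕ) (τ : Ω → ℝ≥0∞) (ω : Ω) :
    dis k τ ω ≤ τ ω + (((1 / 2) ^ k : ℝ≥0) : ℝ≥0∞) := by
  unfold dis
  rcases h : disIdx k τ ω with _ | i
  · rw [disIdx_none.1 h]; simp
  · refine le_trans ?_ (add_le_add_left (disIdx_some.1 h).1 _)
    simp only [disV]
    rw [← ENNReal.coe_add, ENNReal.coe_le_coe, dyp, add_div]
    simp

lemma dis_tendsto (τ : Ω → ℝ≥0∞) (ω : Ω) :
    Tendsto (fun k => dis k τ ω) atTop (𝓝 (τ ω)) := by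
  have h1 : Tendsto (fun k : ℕ => τ ω + (((1 / 2) ^ k : ℝ≥0) : ℝ≥0∞)) atTop (𝓝 (τ ω + (0 : ℝ≥0))) := by
    refine Tendsto.add tendsto_const_nhds (ENNReal.tendsto_coe.2 ?_)
    exact tendsto_pow_atTop_nhds_zero_of_lt_one (by positivity) (by
      rw [← NNReal.coe_lt_coe]; push_cast; norm_num)
  simp only [ENNReal.coe_zero, add_zero] at h1
  exact tendsto_of_tendsto_of_tendsto_of_le_of_le tendsto_const_nhds h1
    (fun k => le_dis k τ ω) (fun k => dis_le k τ ω)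

lemma disIdx_meas {𝔉 : ℝ≥0 → MeasurableSpace Ω} (hmono : Monotone 𝔉) {τ : Ω → ℝ≥0∞}
    (hτ : IsStoppingTimeE 𝔉 τ) (k i : ℕ) :
    MeasurableSet[𝔉 (dyp k i)] {ω | disIdx k τ ω = some i} := by
  have : {ω | disIdx k τ ω = some i} =
      {ω | τ ω < dyp k i} \ {ω | τ ω < ((i / 2 ^ k : ℝ≥0) : ℝ≥0∞)} := by
    ext ω
    simp only [mem_ofPred_eq, disIdx_some, Set.mem_sdiff, not_lt]
    tauto
  rw [this]
  refine MeasurableSet.diff (stop_lt hmono hτ _) (hmono ?_ _ (stop_lt hmono hτ _))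
  unfold dyp
  gcongr
  simp

/-- If `A` is prior to `σ ≤ τ` then its pieces are known at the discretization times. -/
lemma disIdx_inter_meas {𝔉 : ℝ≥0 → MeasurableSpace Ω} (hmono : Monotone 𝔉) {σ τ : Ω → ℝ≥0∞}
    (hστ : ∀ ω, σ ω ≤ τ ω)
    (hτ : IsStoppingTimeE 𝔉 τ) {A : Set Ω}
    (hA : ∀ t : ℝ≥0, MeasurableSet[𝔉 t] (A ∩ {ω | σ ω ≤ t})) (k i : ℕ) :
    MeasurableSet[𝔉 (dyp k i)] (A ∩ {ω | disIdx k τ ω = some i}) := by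
  have : A ∩ {ω | disIdx k τ ω = some i} =
      (A ∩ {ω | σ ω ≤ dyp k i}) ∩ {ω | disIdx k τ ω = some i} := by
    ext ω
    simp only [mem_inter_iff, mem_ofPred_eq]
    constructor
    · rintro ⟨h1, h2⟩
      exact ⟨⟨h1, (hστ ω).trans (disIdx_some.1 h2).2.le⟩, h2⟩
    · tauto
  rw [this]
  exact MeasurableSet.inter (hA _) (disIdx_meas hmono hτ k i)

lemma stop_dis {𝔉 : ℝ≥0 → MeasurableSpace Ω} (hmono : Monotone 𝔉) {τ : Ω → ℝ≥0∞}
    (hτ : IsStoppingTimeE 𝔉 τ) (k : ℕ) : IsStoppingTimeE 𝔉 (dis k τ) := by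
  refine stop_glue (disIdx k τ) (fun o _ => disV k o) (fun o _ => disV k o)
    (fun o => stop_const 𝔉 _) ?_ (fun _ _ _ => le_rfl)
  rintro (_ | i) t
  · simp [disV]
  · by_cases h : disV k (some i) ≤ t
    · simp only [h, ofPred_true, inter_univ]
      exact hmono (ENNReal.coe_le_coe.1 h) _ (disIdx_meas hmono hτ k i)
    · simp [h]

/-- Push a strategy beyond the time `d`. -/
def push (X : ℝ≥0 → Ω → ℝ) (B : ℕ → Set ℝ) (τ : ℕ → Ω → ℝ≥0∞) (d : Ω → ℝ≥0∞) :
    ℕ → Ω → ℝ≥0∞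
  | 0 => fun ω => max (τ 1 ω) (hitAfterE X (B 0) d ω)
  | i + 1 => fun ω => max (τ (i + 2) ω) (hitAfterE X (B (i + 1)) (push X B τ d i) ω)

lemma push_congr (X : ℝ≥0 → Ω → ℝ) (B : ℕ → Set ℝ) (τ : ℕ → Ω → ℝ≥0∞) {d d' : Ω → ℝ≥0∞}
    {ω : Ω} (h : d ω = d' ω) (i : ℕ) : push X B τ d i ω = push X B τ d' i ω := by
  induction i with
  | zero => simp only [push, hit_congr X (B 0) h]
  | succ i ih => simp only [push, hit_congr X (B (i + 1)) ih]

lemma push_ge (X : ℝ≥0 → Ω → ℝ) (B : ℕ → Set ℝ) (τ : ℕ → Ω → ℝ≥0∞) (d : Ω → ℝ≥0∞)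
    (ω : Ω) (i : ℕ) : τ (i + 1) ω ≤ push X B τ d i ω := by
  cases i <;> simp [push]

lemma push_tendsto (X : ℝ≥0 → Ω → ℝ) (B : ℕ → Set ℝ) (τ : ℕ → Ω → ℝ≥0∞)
    (d : ℕ → Ω → ℝ≥0∞) (n : ℕ) (ω : Ω)
    (hτ : ∀ i : ℕ, i + 1 < n → hitAfterE X (B i) (τ i) ω ≤ τ (i + 1) ω)
    (hle : ∀ k, τ 0 ω ≤ d k ω) (h : Tendsto (fun k => d k ω) atTop (𝓝 (τ 0 ω)))
    (i : ℕ) (hi : i + 1 < n) :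
    Tendsto (fun k => push X B τ (d k) i ω) atTop (𝓝 (τ (i + 1) ω)) := by
  induction i with
  | zero =>
    have := (tendsto_const_nhds (x := τ 1 ω)).max (hit_tendsto X (B 0) hle h)
    rwa [max_eq_left (hτ 0 hi)] at this
  | succ i ih =>
    have := (tendsto_const_nhds (x := τ (i + 2) ω)).max
      (hit_tendsto X (B (i + 1)) (d := fun k => push X B τ (d k) i)
        (fun k => push_ge X B τ (d k) ω i) (ih (by omega)))
    rwa [max_eq_left (hτ (i + 1) hi)] at this

lemma push_stop {𝔉 : ℝ≥0 → MeasurableSpace Ω} (hmono : Monotone 𝔉)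
    (hrc : RightContinuousFilt 𝔉) (X : ℝ≥0 → Ω → ℝ) (B : ℕ → Set ℝ) (n : ℕ)
    (hhit : ∀ i, i + 1 < n → ∀ s : ℝ≥0,
      IsStoppingTimeE 𝔉 (hitAfterE X (B i) (fun _ => (s : ℝ≥0∞))))
    (τ : ℕ → Ω → ℝ≥0∞) (hτ : ∀ i < n, IsStoppingTimeE 𝔉 (τ i)) (d : Ω → ℝ≥0∞)
    (hd : IsStoppingTimeE 𝔉 d) (i : ℕ) (hi : i + 1 < n) :
    IsStoppingTimeE 𝔉 (push X B τ d i) := by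
  induction i with
  | zero => exact stop_max (hτ 1 hi) (stop_hit hmono hrc X _ (hhit 0 hi) hd)
  | succ i ih =>
    exact stop_max (hτ (i + 2) hi) (stop_hit hmono hrc X _ (hhit (i + 1) hi) (ih (by omega)))

lemma push_strategy {𝔉 : ℝ≥0 → MeasurableSpace Ω} (hmono : Monotone 𝔉)
    (hrc : RightContinuousFilt 𝔉) (X : ℝ≥0 → Ω → ℝ) (B : ℕ → Set ℝ) (m : ℕ)
    (hhit : ∀ i, i + 1 < m + 1 → ∀ s : ℝ≥0,
      IsStoppingTimeE 𝔉 (hitAfterE X (B i) (fun _ => (s : ℝ≥0∞))))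
    (τ : ℕ → Ω → ℝ≥0∞) (hτ : ∀ i < m + 1, IsStoppingTimeE 𝔉 (τ i)) (d : Ω → ℝ≥0∞)
    (hd : IsStoppingTimeE 𝔉 d) :
    IsStrategyB 𝔉 X (fun i => B (i + 1)) m (hitAfterE X (B 0) d) (push X B τ d) := by
  refine ⟨fun i hi => push_stop hmono hrc X B (m + 1) hhit τ hτ d hd i (by omega), ?_, ?_⟩
  · intro ω; simp [push]
  · intro i hi ω; simp [push]

lemma evI_tendsto {V : ℝ≥0 → Ω → ℝ} {Vi : Ω → ℝ}
    (hV : ∀ ω t, ContinuousWithinAt (fun s => V s ω) (Set.Ici t) t)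
    {τ : Ω → ℝ≥0∞} {d : ℕ → Ω → ℝ≥0∞} {ω : Ω}
    (hle : ∀ k, τ ω ≤ d k ω) (h : Tendsto (fun k => d k ω) atTop (𝓝 (τ ω))) :
    Tendsto (fun k => evI V Vi (d k) ω) atTop (𝓝 (evI V Vi τ ω)) := by
  by_cases ht : τ ω = ∞
  · have : ∀ k, d k ω = ∞ := fun k => top_le_iff.1 (ht ▸ hle k)
    simp [evI, ht, this]
  · have h1 : ∀ᶠ k in atTop, d k ω < ∞ := h.eventually (gt_mem_nhds (lt_top_iff_ne_top.2 ht))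
    have h2 : Tendsto (fun k => (d k ω).toNNReal) atTop (𝓝 (τ ω).toNNReal) :=
      (ENNReal.tendsto_toNNReal ht).comp h
    have h3 : Tendsto (fun k => (d k ω).toNNReal) atTop (𝓝[≥] (τ ω).toNNReal) := by
      refine tendsto_nhdsWithin_iff.2 ⟨h2, ?_⟩
      filter_upwards [h1] with k hk
      exact ENNReal.toNNReal_mono hk.ne (hle k)
    have h4 := (hV ω (τ ω).toNNReal).tendsto.comp h3
    simp only [evI, ne_eq, ht, not_false_eq_true, if_true]
    refine h4.congr' ?_
    filter_upwards [h1] with k hk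
    simp [hk.ne]


lemma meas_of_ae {μ : Measure Ω} {m : MeasurableSpace Ω}
    (hnull : ∀ A : Set Ω, μ A = 0 → MeasurableSet[m] A) {f g : Ω → ℝ}
    (hfg : f =ᵐ[μ] g) (hg : Measurable[m] g) : Measurable[m] f := by
  intro s hs
  have hN : μ {ω | ¬ f ω = g ω} = 0 := hfg
  have : f ⁻¹' s = (g ⁻¹' s \ {ω | ¬ f ω = g ω}) ∪ (f ⁻¹' s ∩ {ω | ¬ f ω = g ω}) := by
    ext ω
    by_cases h : f ω = g ω <;> simp [h]
  rw [this]
  exact MeasurableSet.union (MeasurableSet.diff (hg hs) (hnull _ hN))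
    (hnull _ (measure_mono_null inter_subset_right hN))

lemma condExp_le_of_setIntegral {μ : Measure Ω} [IsFiniteMeasure μ] {m : MeasurableSpace Ω}
    (hm : m ≤ m0) {f g : Ω → ℝ} (hf : Integrable f μ) (hg : Integrable g μ)
    (h : ∀ A, MeasurableSet[m] A → ∫ ω in A, f ω ∂μ ≤ ∫ ω in A, g ω ∂μ) :
    μ[f | m] ≤ᵐ[μ] μ[g | m] := by
  have key : μ[f | m] ≤ᵐ[μ.trim hm] μ[g | m] := by
    refine ae_le_of_forall_setIntegral_le
      (integrable_condExp.trim hm stronglyMeasurable_condExp)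
      (integrable_condExp.trim hm stronglyMeasurable_condExp) ?_
    intro s hs _
    rw [← setIntegral_trim hm stronglyMeasurable_condExp hs,
      ← setIntegral_trim hm stronglyMeasurable_condExp hs,
      setIntegral_condExp hm hf hs, setIntegral_condExp hm hg hs]
    exact h s hs
  exact ae_le_of_ae_le_trim key

lemma setIntegral_partition_le {μ : Measure Ω} {ι : Type*} [Countable ι] (J : Ω → ι)
    (hJ : ∀ i, MeasurableSet {ω | J ω = i}) {f g : Ω → ℝ} (hf : Integrable f μ)
    (hg : Integrable g μ) {A : Set Ω} (hA : MeasurableSet A)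
    (h : ∀ i, ∫ ω in A ∩ {ω | J ω = i}, f ω ∂μ ≤ ∫ ω in A ∩ {ω | J ω = i}, g ω ∂μ) :
    ∫ ω in A, f ω ∂μ ≤ ∫ ω in A, g ω ∂μ := by
  have hU : A = ⋃ i, A ∩ {ω | J ω = i} := by
    ext ω; simp
  have hd : Pairwise (Function.onFun Disjoint fun i => A ∩ {ω | J ω = i}) := by
    intro i j hij
    refine Set.disjoint_left.2 ?_
    rintro ω ⟨-, h1⟩ ⟨-, h2⟩
    exact hij (h1.symm.trans h2)
  have h1 := hasSum_integral_iUnion (μ := μ) (f := f) (fun i => hA.inter (hJ i)) hd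
    hf.integrableOn
  have h2 := hasSum_integral_iUnion (μ := μ) (f := g) (fun i => hA.inter (hJ i)) hd
    hg.integrableOn
  rw [← hU] at h1 h2
  exact hasSum_le h h1 h2

lemma essSup_seq {μ : Measure Ω} {F : Set (Ω → ℝ)} {W : Ω → ℝ} (hne : F.Nonempty)
    (hmeas : ∀ f ∈ F, Measurable f) (hpos : ∀ f ∈ F, 0 ≤ᵐ[μ] f)
    {H : Ω → ℝ} (hH : Integrable H μ) (hle : ∀ f ∈ F, f ≤ᵐ[μ] H) (hW : IsEssSupFam μ F W) :
    ∃ f : ℕ → Ω → ℝ, (∀ j, f j ∈ F) ∧ ∀ᵐ ω ∂μ, IsLUB (range fun j => f j ω) (W ω) := by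
  let I : (ℕ → F) → ℝ≥0∞ := fun s => ∫⁻ ω, ⨆ j, ENNReal.ofReal ((s j : Ω → ℝ) ω) ∂μ
  obtain ⟨f0, hf0⟩ := hne
  have hbd : ∀ s, I s ≤ ∫⁻ ω, ENNReal.ofReal (H ω) ∂μ := by
    intro s
    refine lintegral_mono_ae ?_
    filter_upwards [ae_all_iff.2 fun j => hle _ (s j).2] with ω hω
    exact iSup_le fun j => ENNReal.ofReal_le_ofReal (hω j)
  have hfin : ∫⁻ ω, ENNReal.ofReal (H ω) ∂μ ≠ ∞ := by
    have := hH.2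
    refine ((lintegral_mono fun ω => ?_).trans_lt this).ne
    rw [Real.enorm_eq_ofReal_abs]
    exact ENNReal.ofReal_le_ofReal (le_abs_self _)
  obtain ⟨u, -, hu, huS⟩ := exists_seq_tendsto_sSup (S := range I)
    ⟨_, ⟨fun _ => ⟨f0, hf0⟩, rfl⟩⟩ (OrderTop.bddAbove _)
  choose s hs using huS
  let t : ℕ → F := fun j => s j.unpair.1 j.unpair.2
  have hIt : ∀ r, I r ≤ I t := by
    intro r
    have h1 : I r ≤ sSup (range I) := le_sSup ⟨r, rfl⟩
    refine h1.trans (le_of_tendsto' hu fun n => ?_)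
    rw [← hs n]
    refine lintegral_mono fun ω => iSup_le fun j => ?_
    refine le_trans (le_of_eq ?_) (le_iSup _ (Nat.pair n j))
    simp [t]
  have hmI : ∀ r : ℕ → F, Measurable fun ω => ⨆ j, ENNReal.ofReal ((r j : Ω → ℝ) ω) :=
    fun r => Measurable.iSup fun j => (hmeas _ (r j).2).ennreal_ofReal
  have hall : ∀ g ∈ F, ∀ᵐ ω ∂μ, ENNReal.ofReal (g ω) ≤ ⨆ j, ENNReal.ofReal ((t j : Ω → ℝ) ω) := by
    intro g hg
    let r : ℕ → F := fun j => match j with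
      | 0 => ⟨g, hg⟩
      | j + 1 => t j
    have h1 : (fun ω => ⨆ j, ENNReal.ofReal ((t j : Ω → ℝ) ω)) ≤
        fun ω => ⨆ j, ENNReal.ofReal ((r j).1 ω) :=
      fun ω => iSup_le fun j => le_iSup (fun j => ENNReal.ofReal ((r j).1 ω)) (j + 1)
    have := ae_eq_of_ae_le_of_lintegral_le (Eventually.of_forall h1)
      (ne_top_of_le_ne_top hfin (hbd t)) (hmI r).aemeasurable (hIt r)
    filter_upwards [this] with ω hω
    rw [hω]
    exact le_iSup (fun j => ENNReal.ofReal ((r j : Ω → ℝ) ω)) 0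
  refine ⟨fun j => t j, fun j => (t j).2, ?_⟩
  have hbdd : ∀ᵐ ω ∂μ, BddAbove (range fun j => (t j : Ω → ℝ) ω) := by
    filter_upwards [ae_all_iff.2 fun j => hle _ (t j).2] with ω hω
    exact ⟨H ω, by rintro _ ⟨j, rfl⟩; exact hω j⟩
  have hup : ∀ g ∈ F, g ≤ᵐ[μ] fun ω => ⨆ j, (t j : Ω → ℝ) ω := by
    intro g hg
    filter_upwards [hall g hg, hbdd, ae_all_iff.2 fun j => hpos _ (t j).2, hpos g hg]
      with ω h1 h2 h3 h4
    have h5 : (⨆ j, ENNReal.ofReal ((t j : Ω → ℝ) ω)) ≤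
        ENNReal.ofReal (⨆ j, (t j : Ω → ℝ) ω) :=
      iSup_le fun j => ENNReal.ofReal_le_ofReal (le_ciSup h2 j)
    exact (ENNReal.ofReal_le_ofReal_iff (Real.iSup_nonneg h3)).1 (h1.trans h5)
  filter_upwards [hbdd, hW.2 _ hup, ae_all_iff.2 fun j => hW.1 _ (t j).2] with ω h1 h2 h3
  have h4 : W ω = ⨆ j, (t j : Ω → ℝ) ω := le_antisymm h2 (ciSup_le h3)
  rw [h4]
  exact isLUB_ciSup h1

lemma ui_conv {μ : Measure Ω} [IsFiniteMeasure μ] {g : Ω → ℝ} (hg : Integrable g μ)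
    {H : ℕ → MeasurableSpace Ω} (hH : ∀ k, H k ≤ m0) {u : ℕ → Ω → ℝ} {v : Ω → ℝ}
    (hum : ∀ k, AEStronglyMeasurable (u k) μ) (hpos : ∀ k, 0 ≤ᵐ[μ] u k)
    (hle : ∀ k, u k ≤ᵐ[μ] μ[g | H k])
    (hlim : ∀ᵐ ω ∂μ, Tendsto (fun k => u k ω) atTop (𝓝 (v ω))) :
    (∀ k, Integrable (u k) μ) ∧ Integrable v μ ∧
      Tendsto (fun k => eLpNorm (u k - v) 1 μ) atTop (𝓝 0) := by
  obtain ⟨h1, h2, C, h3⟩ := hg.uniformIntegrable_condExp (ι := ℕ) hH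
  have hnorm : ∀ k, ∀ᵐ ω ∂μ, ‖u k ω‖ ≤ ‖(μ[g | H k]) ω‖ := by
    intro k
    filter_upwards [hpos k, hle k] with ω h4 h5
    have h4 : 0 ≤ u k ω := h4
    rw [Real.norm_of_nonneg h4, Real.norm_of_nonneg (h4.trans h5)]
    exact h5
  have hUI : UniformIntegrable u 1 μ := by
    refine ⟨hum, ?_, C, fun k => (eLpNorm_mono_ae (hnorm k)).trans (h3 k)⟩
    intro ε hε
    obtain ⟨δ, hδ, h⟩ := h2 hε
    refine ⟨δ, hδ, fun k s hs hμs => le_trans (eLpNorm_mono_ae ?_) (h k s hs hμs)⟩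
    filter_upwards [hnorm k] with ω hω
    by_cases hs : ω ∈ s <;> simp [hs]
    simpa using hω
  have hv : MemLp v 1 μ := hUI.memLp_of_ae_tendsto hlim
  refine ⟨fun k => memLp_one_iff_integrable.1 (hUI.memLp k), memLp_one_iff_integrable.1 hv, ?_⟩
  exact tendsto_Lp_finite_of_tendsto_ae le_rfl (by simp) hum hv hUI.2.1 hlim

/-- Dyadic points. -/
def dyq (j i : ℕ) : ℝ≥0 := i / 2 ^ j

lemma dyq_mono (j : ℕ) : Monotone (dyq j) := by
  intro a b h
  unfold dyq
  gcongr

lemma dyq_refine (j i l : ℕ) : dyq (j + l) (i * 2 ^ l) = dyq j i := by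
  unfold dyq
  push_cast
  rw [pow_add, mul_div_mul_right]
  positivity

/-- The maximal inequality along dyadic points. -/
lemma maximal_dyadic {μ : Measure Ω} [IsFiniteMeasure μ] {𝔉 : ℝ≥0 → MeasurableSpace Ω}
    (hle : ∀ t, 𝔉 t ≤ m0) (hmono : Monotone 𝔉) {ξ : Ω → ℝ}
    (hpos : 0 ≤ᵐ[μ] ξ) (c : ℝ≥0) :
    c * μ {ω | ∃ j i, (c : ℝ) ≤ (μ[ξ | 𝔉 (dyq j i)]) ω} ≤ ENNReal.ofReal (∫ ω, ξ ω ∂μ) := by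
  let E : ℕ → Set Ω := fun n => {ω | ∃ i ≤ n * 2 ^ n, (c : ℝ) ≤ (μ[ξ | 𝔉 (dyq n i)]) ω}
  have hE : {ω | ∃ j i, (c : ℝ) ≤ (μ[ξ | 𝔉 (dyq j i)]) ω} = ⋃ n, E n := by
    ext ω
    simp only [mem_ofPred_eq, mem_iUnion, E]
    constructor
    · rintro ⟨j, i, h⟩
      refine ⟨j + i, i * 2 ^ i, ?_, by rwa [dyq_refine]⟩
      gcongr <;> omega
    · rintro ⟨n, i, -, h⟩
      exact ⟨n, i, h⟩
  have hEm : Monotone E := by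
    refine monotone_nat_of_le_succ fun n ω => ?_
    rintro ⟨i, hi, h⟩
    refine ⟨i * 2 ^ 1, ?_, by rwa [dyq_refine]⟩
    calc i * 2 ^ 1 ≤ (n * 2 ^ n) * 2 ^ 1 := by gcongr
      _ = n * 2 ^ (n + 1) := by ring
      _ ≤ (n + 1) * 2 ^ (n + 1) := by gcongr; omega
  rw [hE, hEm.measure_iUnion, ENNReal.mul_iSup]
  refine iSup_le fun n => ?_
  let 𝒢 : Filtration ℕ m0 := ⟨fun i => 𝔉 (dyq n i), hmono.comp (dyq_mono n), fun i => hle _⟩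
  have hsub : Submartingale (fun i => μ[ξ | 𝒢 i]) 𝒢 μ := (martingale_condExp ξ 𝒢 μ).submartingale
  have hmax := maximal_ineq hsub.pos (fun i ω => by simp) (ε := c) (n * 2 ^ n)
  refine le_trans (mul_le_mul_right (measure_mono ?_) _) (hmax.trans (ENNReal.ofReal_le_ofReal ?_))
  · rintro ω ⟨i, hi, h⟩
    have : i ∈ Finset.range (n * 2 ^ n + 1) := by simp; omega
    refine le_trans ?_ (Finset.le_sup' (f := fun k => ((fun i => μ[ξ | 𝒢 i])⁺ k ω)) this)
    exact h.trans (le_posPart _)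
  · refine (setIntegral_le_integral (hsub.pos.integrable _) (Eventually.of_forall fun ω => by simp)).trans ?_
    have h0 : 0 ≤ᵐ[μ] μ[ξ | 𝒢 (n * 2 ^ n)] := condExp_nonneg hpos
    rw [← integral_condExp (𝒢.le (n * 2 ^ n)) (f := ξ)]
    refine le_of_eq (integral_congr_ae ?_)
    filter_upwards [h0] with ω hω
    exact posPart_of_nonneg hω

/-- Upward convergence along all dyadic points. -/
lemma levy_dyadic {μ : Measure Ω} [IsFiniteMeasure μ] {𝔉 : ℝ≥0 → MeasurableSpace Ω}
    (hle : ∀ t, 𝔉 t ≤ m0) (hmono : Monotone 𝔉) {ξ : Ω → ℝ} (hξ : Integrable ξ μ)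
    (hm : StronglyMeasurable[⨆ n : ℕ, 𝔉 n] ξ) :
    ∀ᵐ ω ∂μ, ∀ ε : ℝ, 0 < ε → ∃ N : ℕ, ∀ j i, (N : ℝ≥0) ≤ dyq j i →
      |(μ[ξ | 𝔉 (dyq j i)]) ω - ξ ω| ≤ ε := by
  let 𝒢 : Filtration ℕ m0 :=
    ⟨fun i => 𝔉 i, fun a b h => hmono (by exact_mod_cast h), fun i => hle _⟩
  have hL1 : Tendsto (fun n : ℕ => eLpNorm (μ[ξ | 𝔉 n] - ξ) 1 μ) atTop (𝓝 0) :=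
    hξ.tendsto_eLpNorm_condExp (ℱ := 𝒢) hm
  -- it is enough to treat a fixed `ε`
  suffices h : ∀ p : ℕ, ∀ᵐ ω ∂μ, ∃ N : ℕ, ∀ j i, (N : ℝ≥0) ≤ dyq j i →
      |(μ[ξ | 𝔉 (dyq j i)]) ω - ξ ω| ≤ 2 * (1 / ((p : ℝ) + 1)) by
    filter_upwards [ae_all_iff.2 h] with ω hω ε hε
    obtain ⟨p, hp⟩ := exists_nat_one_div_lt (half_pos hε)
    obtain ⟨N, hN⟩ := hω p
    exact ⟨N, fun j i hji => (hN j i hji).trans (by linarith)⟩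
  intro p
  let c : ℝ≥0 := 1 / ((p : ℝ≥0) + 1)
  have hc : 0 < c := by positivity
  have hcR : (c : ℝ) = 1 / ((p : ℝ) + 1) := by simp [c]
  rw [← hcR]
  rw [ae_iff]
  set Bad := {ω | ¬ ∃ N : ℕ, ∀ j i, (N : ℝ≥0) ≤ dyq j i →
      |(μ[ξ | 𝔉 (dyq j i)]) ω - ξ ω| ≤ 2 * (c : ℝ)} with hBad
  have key : ∀ N : ℕ, c * μ Bad ≤ 2 * eLpNorm (μ[ξ | 𝔉 N] - ξ) 1 μ := by
    intro N
    set η : Ω → ℝ := fun ω => |ξ ω - (μ[ξ | 𝔉 N]) ω| with hη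
    have hηi : Integrable η μ := (hξ.sub integrable_condExp).abs
    have hη0 : 0 ≤ᵐ[μ] η := Eventually.of_forall fun ω => abs_nonneg _
    have hηn : ENNReal.ofReal (∫ ω, η ω ∂μ) = eLpNorm (μ[ξ | 𝔉 N] - ξ) 1 μ := by
      rw [ofReal_integral_eq_lintegral_ofReal hηi hη0, eLpNorm_one_eq_lintegral_enorm]
      refine lintegral_congr fun ω => ?_
      rw [Real.enorm_eq_ofReal_abs, hη, Pi.sub_apply, abs_sub_comm]
    have hae : ∀ᵐ ω ∂μ, ∀ j i, (N : ℝ≥0) ≤ dyq j i →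
        |(μ[ξ | 𝔉 (dyq j i)]) ω - ξ ω| ≤ (μ[η | 𝔉 (dyq j i)]) ω + η ω := by
      refine ae_all_iff.2 fun j => ae_all_iff.2 fun i => ?_
      by_cases hN : (N : ℝ≥0) ≤ dyq j i
      swap
      · exact Eventually.of_forall fun ω h => absurd h hN
      have e1 : μ[μ[ξ | 𝔉 N] | 𝔉 (dyq j i)] = μ[ξ | 𝔉 N] :=
        condExp_of_stronglyMeasurable (hle _) (stronglyMeasurable_condExp.mono (hmono hN))
          integrable_condExp
      have e2 : μ[ξ - μ[ξ | 𝔉 N] | 𝔉 (dyq j i)] =ᵐ[μ]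
          μ[ξ | 𝔉 (dyq j i)] - μ[μ[ξ | 𝔉 N] | 𝔉 (dyq j i)] := condExp_sub hξ integrable_condExp _
      have e3 : μ[ξ - μ[ξ | 𝔉 N] | 𝔉 (dyq j i)] ≤ᵐ[μ] μ[η | 𝔉 (dyq j i)] :=
        condExp_mono (hξ.sub integrable_condExp) hηi
          (Eventually.of_forall fun ω => le_abs_self _)
      have e4 : μ[-(ξ - μ[ξ | 𝔉 N]) | 𝔉 (dyq j i)] ≤ᵐ[μ] μ[η | 𝔉 (dyq j i)] :=
        condExp_mono (hξ.sub integrable_condExp).neg hηi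
          (Eventually.of_forall fun ω => neg_le_abs _)
      have e5 : μ[-(ξ - μ[ξ | 𝔉 N]) | 𝔉 (dyq j i)] =ᵐ[μ] -μ[ξ - μ[ξ | 𝔉 N] | 𝔉 (dyq j i)] :=
        condExp_neg _ _
      filter_upwards [e2, e3, e4, e5] with ω h2 h3 h4 h5 _
      rw [h5, Pi.neg_apply] at h4
      rw [h2, e1, Pi.sub_apply] at h3 h4
      have h6 := le_abs_self (ξ ω - (μ[ξ | 𝔉 N]) ω)
      have h7 := neg_le_abs (ξ ω - (μ[ξ | 𝔉 N]) ω)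
      have h8 : η ω = |ξ ω - (μ[ξ | 𝔉 N]) ω| := rfl
      rw [abs_le]
      constructor <;> linarith
    have hsub : Bad ≤ᵐ[μ] ({ω | ∃ j i, (c : ℝ) ≤ (μ[η | 𝔉 (dyq j i)]) ω} ∪
        {ω | (c : ℝ≥0∞) ≤ ENNReal.ofReal (η ω)} : Set Ω) := by
      filter_upwards [hae] with ω hω
      intro hb
      by_contra hcon
      have hcon : ¬ ((∃ j i, (c : ℝ) ≤ (μ[η | 𝔉 (dyq j i)]) ω) ∨
        (c : ℝ≥0∞) ≤ ENNReal.ofReal (η ω)) := hcon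
      push Not at hcon
      apply hb
      refine ⟨N, fun j i hji => (hω j i hji).trans ?_⟩
      have h1 := hcon.1 j i
      have h2 : η ω < c := by
        have := hcon.2
        rw [← ENNReal.ofReal_coe_nnreal, ENNReal.ofReal_lt_ofReal_iff (by exact_mod_cast hc)] at this
        exact this
      linarith
    calc c * μ Bad ≤ c * (μ {ω | ∃ j i, (c : ℝ) ≤ (μ[η | 𝔉 (dyq j i)]) ω} +
          μ {ω | (c : ℝ≥0∞) ≤ ENNReal.ofReal (η ω)}) :=
        mul_le_mul_right ((measure_mono_ae hsub).trans (measure_union_le _ _)) _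
      _ = c * μ {ω | ∃ j i, (c : ℝ) ≤ (μ[η | 𝔉 (dyq j i)]) ω} +
          c * μ {ω | (c : ℝ≥0∞) ≤ ENNReal.ofReal (η ω)} := mul_add _ _ _
      _ ≤ ENNReal.ofReal (∫ ω, η ω ∂μ) + ENNReal.ofReal (∫ ω, η ω ∂μ) := by
        refine add_le_add (maximal_dyadic hle hmono hη0 c) ?_
        rw [ofReal_integral_eq_lintegral_ofReal hηi hη0]
        exact mul_meas_ge_le_lintegral₀ hηi.1.aemeasurable.ennreal_ofReal _
      _ = 2 * eLpNorm (μ[ξ | 𝔉 N] - ξ) 1 μ := by rw [hηn, two_mul]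
  have hz : c * μ Bad ≤ 0 := by
    have := ENNReal.Tendsto.const_mul (a := 2) hL1 (Or.inr (by simp))
    rw [mul_zero] at this
    exact ge_of_tendsto' this key
  rcases mul_eq_zero.1 (le_antisymm hz bot_le) with h | h
  · exact absurd (by exact_mod_cast h) hc.ne'
  · exact h

/-- A right-continuous function with dyadic values in a closed set. -/
lemma rc_closed {φ : ℝ≥0 → ℝ} (hφ : ∀ t, ContinuousWithinAt φ (Set.Ici t) t) {C : Set ℝ}
    (hC : IsClosed C) {a : ℝ≥0} (h : ∀ j i, a ≤ dyq j i → φ (dyq j i) ∈ C) (t : ℝ≥0)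
    (ht : a ≤ t) : φ t ∈ C := by
  have h1 := evI_tendsto (V := fun s (_ : Unit) => φ s) (Vi := fun _ => 0) (fun _ => hφ)
    (τ := fun _ => (t : ℝ≥0∞)) (d := fun k => dis k fun _ => (t : ℝ≥0∞)) (ω := ())
    (fun k => le_dis k _ _) (dis_tendsto _ _)
  have h2 : evI (fun s (_ : Unit) => φ s) (fun _ => 0) (fun _ => (t : ℝ≥0∞)) () = φ t := by
    simp [evI]
  rw [h2] at h1
  refine hC.mem_of_tendsto h1 (Eventually.of_forall fun k => ?_)
  have h3 := le_dis k (fun _ : Unit => (t : ℝ≥0∞)) ()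
  have h4 : ∃ i, dis k (fun _ : Unit => (t : ℝ≥0∞)) () = dyq k i := by
    refine ⟨⌊2 ^ k * t⌋₊ + 1, ?_⟩
    simp [dis, disIdx, disV, dyp, dyq]
  obtain ⟨i, hi⟩ := h4
  have h5 : evI (fun s (_ : Unit) => φ s) (fun _ => 0) (dis k fun _ => (t : ℝ≥0∞)) () =
      φ (dyq k i) := by
    simp [evI, hi]
  rw [h5]
  rw [hi, ENNReal.coe_le_coe] at h3
  exact h k i (ht.trans h3)


/-- The standing assumptions on the filtration and the reward process. -/
structure Base (μ : Measure Ω) (𝔉 : ℝ≥0 → MeasurableSpace Ω) (Y : ℝ≥0 → Ω → ℝ) : Prop where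
  hle : ∀ t, 𝔉 t ≤ m0
  hmono : Monotone 𝔉
  hrc : RightContinuousFilt 𝔉
  hnull : ∀ A : Set Ω, μ A = 0 → MeasurableSet[𝔉 0] A
  hadapt : ∀ t, Measurable[𝔉 t] (Y t)
  hYpos : ∀ t ω, 0 ≤ Y t ω
  hYrc : ∀ ω t, ContinuousWithinAt (fun s => Y s ω) (Set.Ici t) t
  hYint : ∫⁻ ω, ⨆ t : ℝ≥0, ENNReal.ofReal (Y t ω) ∂μ < ∞

/-- Supremum of the process after time `a`, extended version. -/
def SE (Y : ℝ≥0 → Ω → ℝ) (a : ℝ≥0) (ω : Ω) : ℝ≥0∞ :=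
  ⨆ t : ℝ≥0, ⨆ (_ : a ≤ t), ENNReal.ofReal (Y t ω)

/-- Supremum of the process after time `a`. -/
def SR (Y : ℝ≥0 → Ω → ℝ) (a : ℝ≥0) (ω : Ω) : ℝ := (SE Y a ω).toReal

/-- Terminal value. -/
def Yi (Y : ℝ≥0 → Ω → ℝ) (ω : Ω) : ℝ := (⨅ N : ℕ, SE Y N ω).toReal

lemma SE_anti (Y : ℝ≥0 → Ω → ℝ) (ω : Ω) : Antitone fun a => SE Y a ω := by
  intro a b hab
  refine iSup_le fun t => iSup_le fun ht => ?_
  exact le_iSup₂_of_le (f := fun (t : ℝ≥0) (_ : a ≤ t) => ENNReal.ofReal (Y t ω)) t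
    (hab.trans ht) le_rfl

lemma SE_eq_dyadic {Y : ℝ≥0 → Ω → ℝ}
    (hYrc : ∀ ω t, ContinuousWithinAt (fun s => Y s ω) (Set.Ici t) t) (a : ℝ≥0) (ω : Ω) :
    SE Y a ω = ⨆ j, ⨆ i, ⨆ (_ : a ≤ dyq j i), ENNReal.ofReal (Y (dyq j i) ω) := by
  apply le_antisymm
  · refine iSup_le fun t => iSup_le fun ht => ?_
    refine rc_closed (φ := fun s => Y s ω) (hYrc ω)
      (C := {x | ENNReal.ofReal x ≤ ⨆ j, ⨆ i, ⨆ (_ : a ≤ dyq j i),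
        ENNReal.ofReal (Y (dyq j i) ω)})
      (isClosed_le ENNReal.continuous_ofReal continuous_const) (a := a) ?_ t ht
    intro j i h
    show ENNReal.ofReal (Y (dyq j i) ω) ≤ ⨆ j, ⨆ i, ⨆ (_ : a ≤ dyq j i),
      ENNReal.ofReal (Y (dyq j i) ω)
    exact le_iSup_of_le j (le_iSup_of_le i
      (le_iSup_of_le (f := fun _ : a ≤ dyq j i => ENNReal.ofReal (Y (dyq j i) ω)) h le_rfl))
  · refine iSup_le fun j => iSup_le fun i => iSup_le fun h => ?_
    exact le_iSup₂_of_le (f := fun (t : ℝ≥0) (_ : a ≤ t) => ENNReal.ofReal (Y t ω)) _ h le_rfl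

section basic

variable {μ : Measure Ω} {𝔉 : ℝ≥0 → MeasurableSpace Ω} {Y : ℝ≥0 → Ω → ℝ}

lemma Base.le_sup (hb : Base μ 𝔉 Y) (t : ℝ≥0) : 𝔉 t ≤ ⨆ n : ℕ, 𝔉 n := by
  obtain ⟨N, hN⟩ := exists_nat_ge t
  exact (hb.hmono hN).trans (le_iSup (fun n : ℕ => 𝔉 n) N)

lemma Base.sup_le (hb : Base μ 𝔉 Y) : (⨆ n : ℕ, 𝔉 n) ≤ m0 := iSup_le fun n => hb.hle n

lemma Base.SE_meas (hb : Base μ 𝔉 Y) (a : ℝ≥0) : Measurable[⨆ n : ℕ, 𝔉 n] (SE Y a) := by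
  have : SE Y a = fun ω => ⨆ j, ⨆ i, ⨆ (_ : a ≤ dyq j i), ENNReal.ofReal (Y (dyq j i) ω) :=
    funext (SE_eq_dyadic hb.hYrc a)
  rw [this]
  refine Measurable.iSup fun j => Measurable.iSup fun i => Measurable.iSup fun _ => ?_
  exact ENNReal.measurable_ofReal.comp ((hb.hadapt _).mono (hb.le_sup _) le_rfl)

lemma Base.SR_meas (hb : Base μ 𝔉 Y) (a : ℝ≥0) :
    StronglyMeasurable[⨆ n : ℕ, 𝔉 n] (SR Y a) :=
  (ENNReal.measurable_toReal.comp (hb.SE_meas a)).stronglyMeasurable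

lemma Base.Yi_meas (hb : Base μ 𝔉 Y) : StronglyMeasurable[⨆ n : ℕ, 𝔉 n] (Yi Y) :=
  (ENNReal.measurable_toReal.comp (Measurable.iInf fun N : ℕ => hb.SE_meas N)).stronglyMeasurable

lemma SE_zero_eq (Y : ℝ≥0 → Ω → ℝ) (ω : Ω) : SE Y 0 ω = ⨆ t : ℝ≥0, ENNReal.ofReal (Y t ω) := by
  simp [SE]

lemma Base.SE_ae (hb : Base μ 𝔉 Y) : ∀ᵐ ω ∂μ, SE Y 0 ω < ∞ := by
  refine ae_lt_top ((hb.SE_meas 0).mono hb.sup_le le_rfl) ?_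
  simp only [SE_zero_eq]
  exact hb.hYint.ne

lemma SE_fin {ω : Ω} (h : SE Y 0 ω < ∞) (a : ℝ≥0) : SE Y a ω < ∞ :=
  (SE_anti Y ω (show 0 ≤ a from a.2)).trans_lt h

lemma Y_le_SR {ω : Ω} (h : SE Y 0 ω < ∞) {a t : ℝ≥0} (hat : a ≤ t) : Y t ω ≤ SR Y a ω := by
  rw [SR, ← ENNReal.ofReal_le_iff_le_toReal (SE_fin h a).ne]
  exact le_iSup₂_of_le (f := fun (t : ℝ≥0) (_ : a ≤ t) => ENNReal.ofReal (Y t ω)) t hat le_rfl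

lemma SR_nonneg (a : ℝ≥0) (ω : Ω) : 0 ≤ SR Y a ω := ENNReal.toReal_nonneg

lemma Yi_nonneg (ω : Ω) : 0 ≤ Yi Y ω := ENNReal.toReal_nonneg

lemma SR_anti {ω : Ω} (h : SE Y 0 ω < ∞) {a b : ℝ≥0} (hab : a ≤ b) : SR Y b ω ≤ SR Y a ω :=
  ENNReal.toReal_mono (SE_fin h a).ne (SE_anti Y ω hab)

lemma SR_tendsto {ω : Ω} (h : SE Y 0 ω < ∞) :
    Tendsto (fun N : ℕ => SR Y N ω) atTop (𝓝 (Yi Y ω)) := by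
  have h1 : Tendsto (fun N : ℕ => SE Y N ω) atTop (𝓝 (⨅ N : ℕ, SE Y N ω)) :=
    tendsto_atTop_iInf fun a b hab => SE_anti Y ω (by exact_mod_cast hab)
  refine (ENNReal.tendsto_toReal ?_).comp h1
  exact ((iInf_le (fun N : ℕ => SE Y N ω) 0).trans_lt (by simpa using h)).ne

lemma Yi_le_SR {ω : Ω} (h : SE Y 0 ω < ∞) (a : ℝ≥0) : Yi Y ω ≤ SR Y a ω := by
  refine le_of_tendsto (SR_tendsto h) ?_
  obtain ⟨N, hN⟩ := exists_nat_ge a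
  filter_upwards [eventually_ge_atTop N] with k hk
  exact SR_anti h (hN.trans (by exact_mod_cast hk))

lemma Y_bdd {ω : Ω} (h : SE Y 0 ω < ∞) :
    IsBoundedUnder (· ≤ ·) atTop (fun t : ℝ≥0 => Y t ω) :=
  isBoundedUnder_of ⟨SR Y 0 ω, fun t => Y_le_SR h t.2⟩

lemma limsup_eq_Yi (hpos : ∀ t ω, 0 ≤ Y t ω) {ω : Ω} (h : SE Y 0 ω < ∞) :
    limsup (fun t : ℝ≥0 => Y t ω) atTop = Yi Y ω := by
  have hcob : IsCoboundedUnder (· ≤ ·) atTop (fun t : ℝ≥0 => Y t ω) :=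
    IsBoundedUnder.isCoboundedUnder_le (isBoundedUnder_of ⟨0, fun t => hpos t ω⟩)
  apply le_antisymm
  · refine ge_of_tendsto' (SR_tendsto h) fun N => ?_
    refine limsup_le_of_le hcob ?_
    filter_upwards [eventually_ge_atTop (N : ℝ≥0)] with t ht
    exact Y_le_SR h ht
  · refine le_of_forall_lt fun b hb => ?_
    obtain ⟨c, hbc, hc⟩ := exists_between hb
    refine hbc.trans_le ?_
    refine le_limsup_of_frequently_le ?_ (Y_bdd h)
    rw [frequently_atTop]
    intro a
    obtain ⟨N, hN⟩ := exists_nat_ge a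
    by_contra hcon
    push Not at hcon
    have h1 : SE Y N ω ≤ ENNReal.ofReal c :=
      iSup_le fun t => iSup_le fun ht => ENNReal.ofReal_le_ofReal (hcon t (hN.trans ht)).le
    have hc0 : 0 ≤ c := (hpos _ ω).trans (hcon N hN).le
    have h2 : SR Y N ω ≤ c := ENNReal.toReal_le_of_le_ofReal hc0 h1
    exact absurd ((Yi_le_SR h N).trans h2) (not_le.2 hc)

lemma Base.evalAt_ae (hb : Base μ 𝔉 Y) :
    ∀ᵐ ω ∂μ, ∀ τ : Ω → ℝ≥0∞, evalAt Y τ ω = evI Y (Yi Y) τ ω := by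
  filter_upwards [hb.SE_ae] with ω hω τ
  unfold evalAt evI
  rw [limsup_eq_Yi hb.hYpos hω]

lemma evI_nonneg (hpos : ∀ t ω, 0 ≤ Y t ω) (τ : Ω → ℝ≥0∞) (ω : Ω) : 0 ≤ evI Y (Yi Y) τ ω := by
  unfold evI
  split_ifs
  · exact hpos _ _
  · exact Yi_nonneg ω

lemma evI_le_SR {ω : Ω} (h : SE Y 0 ω < ∞) {a : ℝ≥0} {τ : Ω → ℝ≥0∞} (ha : a ≤ τ ω) :
    evI Y (Yi Y) τ ω ≤ SR Y a ω := by
  unfold evI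
  split_ifs with h1
  · refine Y_le_SR h ?_
    rw [← ENNReal.coe_le_coe, ENNReal.coe_toNNReal h1]
    exact ha
  · exact Yi_le_SR h a

lemma Base.SR_int (hb : Base μ 𝔉 Y) (a : ℝ≥0) : Integrable (SR Y a) μ := by
  refine integrable_toReal_of_lintegral_ne_top
    ((hb.SE_meas a).mono hb.sup_le le_rfl).aemeasurable ?_
  refine ((lintegral_mono fun ω => SE_anti Y ω (show 0 ≤ a from a.2)).trans_lt ?_).ne
  simp only [SE_zero_eq]
  exact hb.hYint

lemma Base.Yi_int (hb : Base μ 𝔉 Y) : Integrable (Yi Y) μ := by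
  refine (hb.SR_int 0).mono' (hb.Yi_meas.mono hb.sup_le).aestronglyMeasurable ?_
  filter_upwards [hb.SE_ae] with ω hω
  rw [Real.norm_of_nonneg (Yi_nonneg ω)]
  exact Yi_le_SR hω 0

lemma stop_top_meas (hle : ∀ t, 𝔉 t ≤ m0) {τ : Ω → ℝ≥0∞} (hτ : IsStoppingTimeE 𝔉 τ) :
    MeasurableSet {ω | τ ω = ∞} := by
  have : {ω | τ ω = ∞} = (⋃ N : ℕ, {ω | τ ω ≤ ((N : ℝ≥0) : ℝ≥0∞)})ᶜ := by
    ext ω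
    simp only [mem_ofPred_eq, mem_compl_iff, mem_iUnion, not_exists, not_le]
    constructor
    · intro h N; rw [h]; exact ENNReal.coe_lt_top
    · intro h
      by_contra hne
      obtain ⟨N, hN⟩ := exists_nat_ge (τ ω).toNNReal
      have := h N
      rw [← ENNReal.coe_toNNReal hne, ENNReal.coe_lt_coe] at this
      exact absurd this (not_lt.2 hN)
  rw [this]
  exact (MeasurableSet.iUnion fun N : ℕ => hle _ _ (hτ N)).compl

lemma disIdx_meas0 (hle : ∀ t, 𝔉 t ≤ m0) (hmono : Monotone 𝔉) {τ : Ω → ℝ≥0∞}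
    (hτ : IsStoppingTimeE 𝔉 τ) (k : ℕ) (o : Option ℕ) :
    MeasurableSet {ω | disIdx k τ ω = o} := by
  rcases o with _ | i
  · simp only [disIdx_none]
    exact stop_top_meas hle hτ
  · exact hle _ _ (disIdx_meas hmono hτ k i)

lemma glue_meas {ι : Type*} [Countable ι] {J : Ω → ι} (hJ : ∀ i, MeasurableSet {ω | J ω = i})
    {G : ι → Ω → ℝ} (hG : ∀ i, Measurable (G i)) : Measurable fun ω => G (J ω) ω := by
  intro s hs
  have : (fun ω => G (J ω) ω) ⁻¹' s = ⋃ i, ({ω | J ω = i} ∩ G i ⁻¹' s) := by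
    ext ω; simp
  rw [this]
  exact MeasurableSet.iUnion fun i => (hJ i).inter (hG i hs)

/-- The value of a process at the points of the dyadic grid. -/
def evG (V : ℝ≥0 → Ω → ℝ) (Vi : Ω → ℝ) (k : ℕ) : Option ℕ → Ω → ℝ
  | none => Vi
  | some i => V (dyp k i)

lemma evI_dis (V : ℝ≥0 → Ω → ℝ) (Vi : Ω → ℝ) (k : ℕ) (τ : Ω → ℝ≥0∞) (ω : Ω) :
    evI V Vi (dis k τ) ω = evG V Vi k (disIdx k τ ω) ω := by
  unfold evI dis
  rcases disIdx k τ ω with _ | i <;> simp [disV, evG]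

lemma evI_meas (hle : ∀ t, 𝔉 t ≤ m0) (hmono : Monotone 𝔉) {V : ℝ≥0 → Ω → ℝ} {Vi : Ω → ℝ}
    (hV : ∀ ω t, ContinuousWithinAt (fun s => V s ω) (Set.Ici t) t)
    (hVm : ∀ t, Measurable (V t)) (hVi : Measurable Vi) {τ : Ω → ℝ≥0∞}
    (hτ : IsStoppingTimeE 𝔉 τ) : Measurable (evI V Vi τ) := by
  refine measurable_of_tendsto_metrizable (f := fun k => evI V Vi (dis k τ)) ?_
    (tendsto_pi_nhds.2 fun ω => evI_tendsto hV (fun k => le_dis k τ ω) (dis_tendsto τ ω))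
  intro k
  have : evI V Vi (dis k τ) = fun ω => evG V Vi k (disIdx k τ ω) ω := funext (evI_dis V Vi k τ)
  rw [this]
  refine glue_meas (disIdx_meas0 hle hmono hτ k) ?_
  rintro (_ | i)
  · exact hVi
  · exact hVm _

lemma Base.evI_int (hb : Base μ 𝔉 Y) {τ : Ω → ℝ≥0∞} (hτ : IsStoppingTimeE 𝔉 τ) :
    Integrable (evI Y (Yi Y) τ) μ := by
  refine (hb.SR_int 0).mono' (evI_meas hb.hle hb.hmono hb.hYrc
    (fun t => (hb.hadapt t).mono (hb.hle t) le_rfl)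
    (hb.Yi_meas.mono hb.sup_le).measurable hτ).aestronglyMeasurable ?_
  filter_upwards [hb.SE_ae] with ω hω
  rw [Real.norm_of_nonneg (evI_nonneg hb.hYpos τ ω)]
  exact evI_le_SR hω (by simp)

lemma Base.evalAt_int (hb : Base μ 𝔉 Y) {τ : Ω → ℝ≥0∞} (hτ : IsStoppingTimeE 𝔉 τ) :
    Integrable (evalAt Y τ) μ := by
  refine (hb.evI_int hτ).congr ?_
  filter_upwards [hb.evalAt_ae] with ω hω
  rw [hω]

lemma Base.reward_int (hb : Base μ 𝔉 Y) {n : ℕ} {τ : ℕ → Ω → ℝ≥0∞}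
    (hτ : ∀ i < n, IsStoppingTimeE 𝔉 (τ i)) : Integrable (rewardSum Y n τ) μ := by
  unfold rewardSum
  exact integrable_finsetSum _ fun i hi => hb.evalAt_int (hτ i (Finset.mem_range.1 hi))

lemma Base.reward_nonneg (hb : Base μ 𝔉 Y) (n : ℕ) (τ : ℕ → Ω → ℝ≥0∞) :
    0 ≤ᵐ[μ] rewardSum Y n τ := by
  filter_upwards [hb.evalAt_ae] with ω hω
  refine Finset.sum_nonneg fun i _ => ?_
  rw [hω]
  exact evI_nonneg hb.hYpos _ _

lemma Base.reward_le (hb : Base μ 𝔉 Y) (n : ℕ) (τ : ℕ → Ω → ℝ≥0∞) (a : ℝ≥0)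
    (ha : ∀ i < n, ∀ ω, a ≤ τ i ω) :
    rewardSum Y n τ ≤ᵐ[μ] fun ω => n * SR Y a ω := by
  filter_upwards [hb.evalAt_ae, hb.SE_ae] with ω hω h2
  refine (Finset.sum_le_card_nsmul _ _ (SR Y a ω) fun i hi => ?_).trans (by simp)
  rw [hω]
  exact evI_le_SR h2 (ha i (Finset.mem_range.1 hi) ω)

lemma Base.reward_top (hb : Base μ 𝔉 Y) (n : ℕ) :
    rewardSum Y n (fun _ _ => ∞) =ᵐ[μ] fun ω => n * Yi Y ω := by
  filter_upwards [hb.evalAt_ae] with ω hω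
  unfold rewardSum
  rw [Finset.sum_congr rfl fun i _ => hω _]
  simp [evI]

lemma strategy_ge {X : ℝ≥0 → Ω → ℝ} {B : ℕ → Set ℝ} {n : ℕ} {σ : Ω → ℝ≥0∞}
    {τ : ℕ → Ω → ℝ≥0∞} (h : IsStrategyB 𝔉 X B n σ τ) (i : ℕ) (hi : i < n) (ω : Ω) :
    σ ω ≤ τ i ω := by
  induction i with
  | zero => exact h.2.1 ω
  | succ i ih => exact (ih (by omega)).trans ((le_hit X (B i) (τ i) ω).trans (h.2.2 i hi ω))

lemma strategy_top (X : ℝ≥0 → Ω → ℝ) (B : ℕ → Set ℝ) (n : ℕ) (σ : Ω → ℝ≥0∞) :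
    IsStrategyB 𝔉 X B n σ (fun _ _ => ∞) :=
  ⟨fun _ _ => stop_top 𝔉, fun _ => le_top, fun _ _ _ => le_top⟩

lemma strategy_glue {X : ℝ≥0 → Ω → ℝ} {B : ℕ → Set ℝ} {n : ℕ} {ι : Type*} [Countable ι]
    (J : Ω → ι) (π : ι → Ω → ℝ≥0∞) (T : ι → ℕ → Ω → ℝ≥0∞)
    (hT : ∀ i, IsStrategyB 𝔉 X B n (π i) (T i))
    (hP : ∀ i (t : ℝ≥0), MeasurableSet[𝔉 t] ({ω | J ω = i} ∩ {ω | π i ω ≤ t}))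
    (σ : Ω → ℝ≥0∞) (hσ : ∀ ω, σ ω ≤ π (J ω) ω) :
    IsStrategyB 𝔉 X B n σ (fun l ω => T (J ω) l ω) := by
  refine ⟨fun l hl => ?_, fun ω => (hσ ω).trans ((hT (J ω)).2.1 ω), fun l hl ω => ?_⟩
  · exact stop_glue J π (fun i => T i l) (fun i => (hT i).1 l hl) hP
      (fun i ω _ => strategy_ge (hT i) l hl ω)
  · show hitAfterE X (B l) (fun ω => T (J ω) l ω) ω ≤ T (J ω) (l + 1) ω
    rw [hit_congr X (B l) (τ := fun ω => T (J ω) l ω) (τ' := T (J ω) l) (ω := ω) rfl]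
    exact (hT (J ω)).2.2 l hl ω

lemma condExp_local [IsFiniteMeasure μ] {m : MeasurableSpace Ω} {f g : Ω → ℝ}
    (hf : Integrable f μ) (hg : Integrable g μ) {P : Set Ω} (hP : MeasurableSet[m] P)
    (h : ∀ ω ∈ P, f ω = g ω) : ∀ᵐ ω ∂μ, ω ∈ P → (μ[f | m]) ω = (μ[g | m]) ω := by
  have h1 : P.indicator f = P.indicator g := by
    ext ω
    by_cases hω : ω ∈ P <;> simp [hω, h]
  have h2 := condExp_indicator hf hP
  have h3 := condExp_indicator hg hP
  rw [h1] at h2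
  filter_upwards [h2, h3] with ω h4 h5 hω
  rw [h4] at h5
  simpa [hω] using h5

/-- The value of the essential supremum. -/
structure EssFacts (μ : Measure Ω) (𝔉 : ℝ≥0 → MeasurableSpace Ω) (Y : ℝ≥0 → Ω → ℝ)
    (X : ℝ≥0 → Ω → ℝ) (B : ℕ → Set ℝ) (n : ℕ) (ρ : Ω → ℝ≥0∞) (W : Ω → ℝ) : Prop where
  int : Integrable W μ
  nonneg : 0 ≤ᵐ[μ] W
  lower : μ[fun ω => n * Yi Y ω | sigmaAt 𝔉 ρ] ≤ᵐ[μ] W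
  upper : ∀ a : ℝ≥0, (∀ ω, a ≤ ρ ω) → W ≤ᵐ[μ] μ[fun ω => n * SR Y a ω | sigmaAt 𝔉 ρ]
  attain : ∀ ε : ℝ, 0 < ε → ∃ T, IsStrategyB 𝔉 X B n ρ T ∧
    ∀ᵐ ω ∂μ, W ω - ε ≤ (μ[rewardSum Y n T | sigmaAt 𝔉 ρ]) ω

lemma Base.essFacts [IsFiniteMeasure μ] (hb : Base μ 𝔉 Y) (X : ℝ≥0 → Ω → ℝ) (B : ℕ → Set ℝ)
    (n : ℕ) {ρ : Ω → ℝ≥0∞} (hρ : IsStoppingTimeE 𝔉 ρ) (hm : sigmaAt 𝔉 ρ ≤ m0) {W : Ω → ℝ}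
    (hW : IsEssSupFam μ (gainFamB μ Y 𝔉 X B n ρ) W) : EssFacts μ 𝔉 Y X B n ρ W := by
  have hsint : ∀ a, Integrable (fun ω => (n : ℝ) * SR Y a ω) μ := fun a => (hb.SR_int a).const_mul _
  have hup : ∀ a : ℝ≥0, (∀ ω, a ≤ ρ ω) → ∀ f ∈ gainFamB μ Y 𝔉 X B n ρ,
      f ≤ᵐ[μ] μ[fun ω => n * SR Y a ω | sigmaAt 𝔉 ρ] := by
    rintro a ha f ⟨T, hT, rfl⟩
    exact condExp_mono (hb.reward_int hT.1) (hsint a)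
      (hb.reward_le n T a fun i hi ω => (ha ω).trans (strategy_ge hT i hi ω))
  have hpos : ∀ f ∈ gainFamB μ Y 𝔉 X B n ρ, 0 ≤ᵐ[μ] f := by
    rintro f ⟨T, hT, rfl⟩
    exact condExp_nonneg (hb.reward_nonneg n T)
  have hmeasG : ∀ f ∈ gainFamB μ Y 𝔉 X B n ρ, Measurable[sigmaAt 𝔉 ρ] f := by
    rintro f ⟨T, hT, rfl⟩
    exact stronglyMeasurable_condExp.measurable
  have hne : (gainFamB μ Y 𝔉 X B n ρ).Nonempty := ⟨_, ⟨_, strategy_top X B n ρ, rfl⟩⟩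
  obtain ⟨f, hfF, hlub⟩ := essSup_seq hne
    (fun f hf => (hmeasG f hf).mono hm le_rfl) hpos integrable_condExp
    (hup 0 (fun ω => by simp)) hW
  have hWsup : W =ᵐ[μ] fun ω => ⨆ j, f j ω := by
    filter_upwards [hlub] with ω hω
    exact hω.ciSup_eq.symm
  have hsupm : Measurable[sigmaAt 𝔉 ρ] fun ω => ⨆ j, f j ω :=
    Measurable.iSup fun j => hmeasG _ (hfF j)
  have hWpos : 0 ≤ᵐ[μ] W := (hpos _ (hfF 0)).trans (hW.1 _ (hfF 0))
  refine ⟨?_, hWpos, ?_, fun a ha => hW.2 _ (hup a ha), ?_⟩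
  · refine Integrable.mono' (g := μ[fun ω => n * SR Y 0 ω | sigmaAt 𝔉 ρ]) integrable_condExp
      ((hsupm.mono hm le_rfl).aestronglyMeasurable.congr hWsup.symm) ?_
    filter_upwards [hWpos, hW.2 _ (hup 0 (fun ω => by simp))] with ω h1 h2
    rw [Real.norm_of_nonneg h1]
    exact h2
  · refine (condExp_congr_ae (hb.reward_top n)).symm.le.trans (hW.1 _ ?_)
    exact ⟨_, strategy_top X B n ρ, rfl⟩
  · intro ε hε
    choose T hT hfT using hfF
    classical
    let p : Ω → ℕ → Prop := fun ω j =>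
      (⨆ j, f j ω) - ε < f j ω ∨ ∀ i, ¬ ((⨆ j, f j ω) - ε < f i ω)
    have hp : ∀ ω, ∃ j, p ω j := by
      intro ω
      by_cases h : ∃ i, (⨆ j, f j ω) - ε < f i ω
      · obtain ⟨i, hi⟩ := h
        exact ⟨i, Or.inl hi⟩
      · push Not at h
        exact ⟨0, Or.inr fun i => not_lt.2 (h i)⟩
    have hfm : ∀ j, Measurable[sigmaAt 𝔉 ρ] (f j) := by
      intro j
      rw [hfT j]
      exact stronglyMeasurable_condExp.measurable
    have hset : ∀ j, MeasurableSet[sigmaAt 𝔉 ρ] {ω | (⨆ j, f j ω) - ε < f j ω} := fun j =>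
      measurableSet_lt (hsupm.sub_const ε) (hfm j)
    have hpm : ∀ j, MeasurableSet[sigmaAt 𝔉 ρ] {ω | p ω j} := by
      intro j
      have : {ω | p ω j} = {ω | (⨆ j, f j ω) - ε < f j ω} ∪
          ⋂ i, {ω | (⨆ j, f j ω) - ε < f i ω}ᶜ := by
        ext ω; simp [p]
      rw [this]
      exact MeasurableSet.union (hset j) (MeasurableSet.iInter fun i => (hset i).compl)
    let K : Ω → ℕ := fun ω => Nat.find (hp ω)
    have hK : Measurable[sigmaAt 𝔉 ρ] K :=
      @measurable_find _ (sigmaAt 𝔉 ρ) p _ hp hpm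
    have hKs : ∀ j, MeasurableSet[sigmaAt 𝔉 ρ] {ω | K ω = j} := fun j =>
      hK (measurableSet_singleton j)
    have hTK : IsStrategyB 𝔉 X B n ρ (fun l ω => T (K ω) l ω) :=
      strategy_glue K (fun _ => ρ) T hT
        (fun i t => (measurableSet_sigmaAt hρ).1 (hKs i) t) ρ (fun ω => le_rfl)
    refine ⟨_, hTK, ?_⟩
    have hloc : ∀ j, ∀ᵐ ω ∂μ, ω ∈ {ω | K ω = j} →
        (μ[rewardSum Y n (fun l ω => T (K ω) l ω) | sigmaAt 𝔉 ρ]) ω =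
        (μ[rewardSum Y n (T j) | sigmaAt 𝔉 ρ]) ω := by
      intro j
      refine condExp_local (hb.reward_int hTK.1) (hb.reward_int (hT j).1) (hKs j) ?_
      rintro ω hω
      have hω : K ω = j := hω
      simp only [rewardSum, evalAt, hω]
    filter_upwards [ae_all_iff.2 hloc, hlub, hWsup] with ω h1 h2 h3
    rw [h1 (K ω) rfl, ← hfT (K ω), h3]
    have h4 : p ω (K ω) := Nat.find_spec (hp ω)
    rcases h4 with h4 | h4
    · exact h4.le
    · exfalso
      rw [h3] at h2
      obtain ⟨_, ⟨i, rfl⟩, hi, -⟩ := h2.exists_between (sub_lt_self (⨆ j, f j ω) hε)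
      exact h4 i hi

end basic


section zfacts

variable {μ : Measure Ω} {𝔉 : ℝ≥0 → MeasurableSpace Ω} {Y : ℝ≥0 → Ω → ℝ}

lemma Base.null_meas (hb : Base μ 𝔉 Y) {A : Set Ω} (hA : μ A = 0) (t : ℝ≥0) :
    MeasurableSet[𝔉 t] A :=
  hb.hmono (show 0 ≤ t from t.2) _ (hb.hnull A hA)

lemma Base.sigmaAt_le (hb : Base μ 𝔉 Y) {ρ : Ω → ℝ≥0∞} (hρ : IsStoppingTimeE 𝔉 ρ)
    (hfin : ∀ᵐ ω ∂μ, ρ ω < ∞) : sigmaAt 𝔉 ρ ≤ m0 := by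
  intro A hA
  rw [measurableSet_sigmaAt hρ] at hA
  have : A = (⋃ N : ℕ, A ∩ {ω | ρ ω ≤ ((N : ℝ≥0) : ℝ≥0∞)}) ∪ (A ∩ {ω | ¬ ρ ω < ∞}) := by
    ext ω
    simp only [mem_union, mem_iUnion, mem_inter_iff, mem_ofPred_eq]
    constructor
    · intro h
      by_cases h2 : ρ ω < ∞
      · obtain ⟨N, hN⟩ := exists_nat_ge (ρ ω).toNNReal
        refine Or.inl ⟨N, h, ?_⟩
        rw [← ENNReal.coe_toNNReal h2.ne]
        exact ENNReal.coe_le_coe.2 hN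
      · exact Or.inr ⟨h, h2⟩
    · rintro (⟨N, h, -⟩ | ⟨h, -⟩) <;> exact h
  rw [this]
  refine MeasurableSet.union (MeasurableSet.iUnion fun N : ℕ => hb.hle _ _ (hA N)) ?_
  exact hb.hle _ _ (hb.hnull _ (measure_mono_null inter_subset_right hfin))

lemma le_sigmaAt (hmono : Monotone 𝔉) {ρ : Ω → ℝ≥0∞} (hρ : IsStoppingTimeE 𝔉 ρ) {t : ℝ≥0}
    (ht : ∀ ω, t ≤ ρ ω) : 𝔉 t ≤ sigmaAt 𝔉 ρ := by
  intro A hA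
  rw [measurableSet_sigmaAt hρ]
  intro s
  by_cases h : t ≤ s
  · exact MeasurableSet.inter (hmono h _ hA) (hρ s)
  · have : A ∩ {ω | ρ ω ≤ (s : ℝ≥0∞)} = ∅ := by
      ext ω
      simp only [mem_inter_iff, mem_ofPred_eq, mem_empty_iff_false, iff_false, not_and, not_le]
      intro _
      exact lt_of_lt_of_le (ENNReal.coe_lt_coe.2 (not_le.1 h)) (ht ω)
    rw [this]
    exact @MeasurableSet.empty _ (𝔉 s)

/-- The facts about the value process of the reduced problem. -/
structure ZF (μ : Measure Ω) (𝔉 : ℝ≥0 → MeasurableSpace Ω) (Y X : ℝ≥0 → Ω → ℝ)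
    (B : ℕ → Set ℝ) (M : ℕ) (W Zr : ℝ≥0 → Ω → ℝ) : Prop where
  hb : Base μ 𝔉 Y
  rc : ∀ ω t, ContinuousWithinAt (fun s => Zr s ω) (Set.Ici t) t
  ess : ∀ t : ℝ≥0, EssFacts μ 𝔉 Y X (fun i => B (i + 1)) M
    (hitAfterE X (B 0) (fun _ => (t : ℝ≥0∞))) (W t)
  hm : ∀ t : ℝ≥0, sigmaAt 𝔉 (hitAfterE X (B 0) (fun _ => (t : ℝ≥0∞))) ≤ m0
  hge : ∀ t : ℝ≥0, 𝔉 t ≤ sigmaAt 𝔉 (hitAfterE X (B 0) (fun _ => (t : ℝ≥0∞)))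
  dom : ∀ (t : ℝ≥0) T, IsStrategyB 𝔉 X (fun i => B (i + 1)) M
    (hitAfterE X (B 0) (fun _ => (t : ℝ≥0∞))) T →
    μ[rewardSum Y M T | sigmaAt 𝔉 (hitAfterE X (B 0) (fun _ => (t : ℝ≥0∞)))] ≤ᵐ[μ] W t
  hmod : ∀ t : ℝ≥0, Zr t =ᵐ[μ] μ[W t | 𝔉 t]

variable {X : ℝ≥0 → Ω → ℝ} {B : ℕ → Set ℝ} {M : ℕ} {W Zr : ℝ≥0 → Ω → ℝ}

lemma ZF.meas (h : ZF μ 𝔉 Y X B M W Zr) (t : ℝ≥0) : Measurable[𝔉 t] (Zr t) :=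
  meas_of_ae (fun _ hA => h.hb.null_meas hA t) (h.hmod t) stronglyMeasurable_condExp.measurable

lemma ZF.nonneg (h : ZF μ 𝔉 Y X B M W Zr) (t : ℝ≥0) : 0 ≤ᵐ[μ] Zr t :=
  (condExp_nonneg (h.ess t).nonneg).trans (h.hmod t).symm.le

lemma ZF.int (h : ZF μ 𝔉 Y X B M W Zr) (t : ℝ≥0) : Integrable (Zr t) μ :=
  integrable_condExp.congr (h.hmod t).symm

lemma ZF.setInt [IsFiniteMeasure μ] (h : ZF μ 𝔉 Y X B M W Zr) (t : ℝ≥0) {A : Set Ω}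
    (hA : MeasurableSet[𝔉 t] A) :
    ∫ ω in A, Zr t ω ∂μ = ∫ ω in A, W t ω ∂μ := by
  rw [← setIntegral_condExp (h.hb.hle t) (h.ess t).int hA]
  exact setIntegral_congr_ae (h.hb.hle t _ hA) ((h.hmod t).mono fun ω hω _ => hω)

lemma ZF.upper [IsFiniteMeasure μ] (h : ZF μ 𝔉 Y X B M W Zr) {a t : ℝ≥0} (hat : a ≤ t) :
    Zr t ≤ᵐ[μ] μ[fun ω => M * SR Y a ω | 𝔉 t] := by
  have h1 := (h.ess t).upper a fun ω =>
    (ENNReal.coe_le_coe.2 hat).trans (le_hit X (B 0) (fun _ => (t : ℝ≥0∞)) ω)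
  refine (h.hmod t).le.trans ((condExp_mono (h.ess t).int integrable_condExp h1).trans ?_)
  exact (condExp_condExp_of_le (h.hge t) (h.hm t)).le

lemma ZF.lower [IsFiniteMeasure μ] (h : ZF μ 𝔉 Y X B M W Zr) (t : ℝ≥0) :
    μ[fun ω => M * Yi Y ω | 𝔉 t] ≤ᵐ[μ] Zr t := by
  refine (condExp_condExp_of_le (h.hge t) (h.hm t)).symm.le.trans ?_
  exact (condExp_mono integrable_condExp (h.ess t).int (h.ess t).lower).trans (h.hmod t).symm.le

lemma ZF.tendsto [IsFiniteMeasure μ] (h : ZF μ 𝔉 Y X B M W Zr) :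
    ∀ᵐ ω ∂μ, Tendsto (fun t => Zr t ω) atTop (𝓝 (M * Yi Y ω)) := by
  have hup : ∀ᵐ ω ∂μ, ∀ (N j i : ℕ), (N : ℝ≥0) ≤ dyq j i →
      Zr (dyq j i) ω ≤ (μ[fun ω => M * SR Y N ω | 𝔉 (dyq j i)]) ω := by
    simp only [ae_all_iff]
    intro N j i hN
    exact h.upper hN
  have hlo : ∀ᵐ ω ∂μ, ∀ (j i : ℕ),
      (μ[fun ω => M * Yi Y ω | 𝔉 (dyq j i)]) ω ≤ Zr (dyq j i) ω := by
    simp only [ae_all_iff]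
    intro j i
    exact h.lower _
  have hl1 := fun N : ℕ => levy_dyadic h.hb.hle h.hb.hmono ((h.hb.SR_int N).const_mul (M : ℝ))
    (stronglyMeasurable_const.mul (h.hb.SR_meas N))
  have hl2 := levy_dyadic h.hb.hle h.hb.hmono (h.hb.Yi_int.const_mul (M : ℝ))
    (stronglyMeasurable_const.mul h.hb.Yi_meas)
  filter_upwards [hup, hlo, ae_all_iff.2 hl1, hl2, h.hb.SE_ae] with ω hup hlo hl1 hl2 hfin
  rw [Metric.tendsto_atTop]
  intro ε hε
  have hS : Tendsto (fun N : ℕ => (M : ℝ) * SR Y N ω) atTop (𝓝 (M * Yi Y ω)) :=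
    (SR_tendsto hfin).const_mul _
  obtain ⟨N0, hN0⟩ := (hS.eventually (eventually_lt_nhds
    (show (M : ℝ) * Yi Y ω < M * Yi Y ω + ε / 4 by linarith))).exists
  obtain ⟨N1, hN1⟩ := hl1 N0 (ε / 4) (by linarith)
  obtain ⟨N2, hN2⟩ := hl2 (ε / 4) (by linarith)
  refine ⟨max (N0 : ℝ≥0) (max N1 N2), fun t ht => ?_⟩
  have hC := rc_closed (φ := fun s => Zr s ω) (h.rc ω)
    (C := Icc ((M : ℝ) * Yi Y ω - ε / 2) (M * Yi Y ω + ε / 2)) isClosed_Icc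
    (a := max (N0 : ℝ≥0) (max N1 N2)) ?_ t ht
  · rw [Real.dist_eq, abs_lt]
    constructor <;> linarith [hC.1, hC.2]
  · intro j i hq
    have q0 := hup N0 j i ((le_max_left _ _).trans hq)
    have q1 := abs_le.1 (hN1 j i ((le_max_left _ _).trans ((le_max_right _ _).trans hq)))
    have q2 := abs_le.1 (hN2 j i ((le_max_right _ _).trans ((le_max_right _ _).trans hq)))
    have q3 := hlo j i
    constructor <;> linarith [q1.1, q1.2, q2.1, q2.2]

lemma ZF.evalAt_ae [IsFiniteMeasure μ] (h : ZF μ 𝔉 Y X B M W Zr) :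
    ∀ᵐ ω ∂μ, ∀ τ : Ω → ℝ≥0∞, evalAt (fun t ω => Y t ω + Zr t ω) τ ω =
      evI Y (Yi Y) τ ω + evI Zr (fun ω => M * Yi Y ω) τ ω := by
  filter_upwards [h.tendsto, h.hb.SE_ae] with ω hω hfin τ
  unfold evalAt evI
  split_ifs with h1
  · rfl
  · have hY := limsup_eq_Yi h.hb.hYpos hfin
    have hbb : IsBoundedUnder (· ≥ ·) atTop (fun t : ℝ≥0 => Y t ω) :=
      isBoundedUnder_of ⟨0, fun t => h.hb.hYpos t ω⟩
    have hcob : IsCoboundedUnder (· ≤ ·) atTop (fun t : ℝ≥0 => Y t ω) :=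
      hbb.isCoboundedUnder_le
    apply le_antisymm
    · have := limsup_add_le hbb (Y_bdd hfin) hω.isCoboundedUnder_le hω.isBoundedUnder_le
      rw [hY, hω.limsup_eq] at this
      exact this
    · have := le_limsup_add (Y_bdd hfin) hcob hω.isBoundedUnder_le hω.isBoundedUnder_ge
      rw [hY, hω.liminf_eq] at this
      exact this

lemma restrict_eq_on (hmono : Monotone 𝔉) {τ : Ω → ℝ≥0∞}
    (hle : ∀ t, 𝔉 t ≤ m0) (hτ : IsStoppingTimeE 𝔉 τ) (k i : ℕ) (A : Set Ω) :
    MeasurableSet[sigmaAt 𝔉 (dis k τ) ⊓ m0] ({ω | disIdx k τ ω = some i} ∩ A) ↔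
      MeasurableSet[𝔉 (dyp k i)] ({ω | disIdx k τ ω = some i} ∩ A) := by
  rw [MeasurableSpace.measurableSet_inf (m₁ := sigmaAt 𝔉 (dis k τ)) (m₂ := m0), measurableSet_sigmaAt (stop_dis hmono hτ k)]
  have key : ∀ ω, disIdx k τ ω = some i → dis k τ ω = dyp k i := by
    intro ω hω; unfold dis; rw [hω]; rfl
  constructor
  · rintro ⟨h1, -⟩
    have := h1 (dyp k i)
    rwa [inter_eq_left.2] at this
    rintro ω ⟨hω, -⟩
    exact (key ω hω).le
  · intro h1
    refine ⟨fun t => ?_, hle _ _ h1⟩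
    by_cases ht : dyp k i ≤ t
    · rw [inter_eq_left.2]
      · exact hmono ht _ h1
      · rintro ω ⟨hω, -⟩
        exact (key ω hω).le.trans (ENNReal.coe_le_coe.2 ht)
    · have : {ω | disIdx k τ ω = some i} ∩ A ∩ {ω | dis k τ ω ≤ (t : ℝ≥0∞)} = ∅ := by
        ext ω
        simp only [mem_inter_iff, mem_ofPred_eq, mem_empty_iff_false, iff_false, not_and, not_le]
        intro hω
        rw [key ω hω.1]
        exact ENNReal.coe_lt_coe.2 (not_le.1 ht)
      rw [this]
      exact @MeasurableSet.empty _ (𝔉 t)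

lemma restrict_eq_on_none (hmono : Monotone 𝔉) {τ : Ω → ℝ≥0∞}
    (hτ : IsStoppingTimeE 𝔉 τ) (k : ℕ) (A : Set Ω) :
    MeasurableSet[sigmaAt 𝔉 (dis k τ) ⊓ m0] ({ω | disIdx k τ ω = none} ∩ A) ↔
      MeasurableSet[m0] ({ω | disIdx k τ ω = none} ∩ A) := by
  rw [MeasurableSpace.measurableSet_inf (m₁ := sigmaAt 𝔉 (dis k τ)) (m₂ := m0), measurableSet_sigmaAt (stop_dis hmono hτ k)]
  refine ⟨fun h => h.2, fun h => ⟨fun t => ?_, h⟩⟩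
  have : {ω | disIdx k τ ω = none} ∩ A ∩ {ω | dis k τ ω ≤ (t : ℝ≥0∞)} = ∅ := by
    ext ω
    simp only [mem_inter_iff, mem_ofPred_eq, mem_empty_iff_false, iff_false, not_and, not_le]
    intro hω
    unfold dis
    rw [hω.1]
    exact ENNReal.coe_lt_top
  rw [this]
  exact @MeasurableSet.empty _ (𝔉 t)

lemma ZF.ui [IsFiniteMeasure μ] (h : ZF μ 𝔉 Y X B M W Zr) {τ : Ω → ℝ≥0∞}
    (hτ : IsStoppingTimeE 𝔉 τ) :
    (∀ k, Integrable (evI Zr (fun ω => M * Yi Y ω) (dis k τ)) μ) ∧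
      Integrable (evI Zr (fun ω => M * Yi Y ω) τ) μ ∧
      Tendsto (fun k => eLpNorm (evI Zr (fun ω => M * Yi Y ω) (dis k τ) -
        evI Zr (fun ω => M * Yi Y ω) τ) 1 μ) atTop (𝓝 0) := by
  have hmeas : ∀ {τ : Ω → ℝ≥0∞}, IsStoppingTimeE 𝔉 τ →
      Measurable (evI Zr (fun ω => M * Yi Y ω) τ) := fun hτ =>
    evI_meas h.hb.hle h.hb.hmono h.rc (fun t => (h.meas t).mono (h.hb.hle t) le_rfl)
      ((h.hb.Yi_meas.mono h.hb.sup_le).measurable.const_mul _) hτ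
  have hSint : Integrable (fun ω => (M : ℝ) * SR Y 0 ω) μ := (h.hb.SR_int 0).const_mul _
  refine ui_conv (g := fun ω => M * SR Y 0 ω) hSint
    (H := fun k => sigmaAt 𝔉 (dis k τ) ⊓ m0) (fun k => inf_le_right)
    (fun k => (hmeas (stop_dis h.hb.hmono hτ k)).aestronglyMeasurable) ?_ ?_
    (Eventually.of_forall fun ω => evI_tendsto h.rc (fun k => le_dis k τ ω) (dis_tendsto τ ω))
  · intro k
    have : ∀ᵐ ω ∂μ, ∀ i, 0 ≤ Zr (dyp k i) ω := ae_all_iff.2 fun i => h.nonneg _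
    filter_upwards [this] with ω hω
    show 0 ≤ evI Zr (fun ω => M * Yi Y ω) (dis k τ) ω
    rw [evI_dis]
    rcases disIdx k τ ω with _ | i
    · exact mul_nonneg (Nat.cast_nonneg _) (Yi_nonneg ω)
    · exact hω i
  · intro k
    have hH : sigmaAt 𝔉 (dis k τ) ⊓ m0 ≤ m0 := inf_le_right
    have h1 : ∀ i, ∀ᵐ ω ∂μ, disIdx k τ ω = some i →
        (μ[fun ω => M * SR Y 0 ω | sigmaAt 𝔉 (dis k τ) ⊓ m0]) ω =
        (μ[fun ω => M * SR Y 0 ω | 𝔉 (dyp k i)]) ω := by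
      intro i
      have := condExp_ae_eq_restrict_of_measurableSpace_eq_on (μ := μ)
        (f := fun ω => (M : ℝ) * SR Y 0 ω) hH
        (h.hb.hle (dyp k i)) (s := {ω | disIdx k τ ω = some i}) ?_
        (restrict_eq_on h.hb.hmono h.hb.hle hτ k i)
      · exact (ae_restrict_iff' (disIdx_meas0 h.hb.hle h.hb.hmono hτ k (some i))).1 this
      · have := (restrict_eq_on h.hb.hmono h.hb.hle hτ k i univ).2
        rw [inter_univ] at this
        exact this (disIdx_meas h.hb.hmono hτ k i)
    have h2 : ∀ᵐ ω ∂μ, disIdx k τ ω = none →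
        (μ[fun ω => M * SR Y 0 ω | sigmaAt 𝔉 (dis k τ) ⊓ m0]) ω = M * SR Y 0 ω := by
      have := condExp_ae_eq_restrict_of_measurableSpace_eq_on (μ := μ)
        (f := fun ω => (M : ℝ) * SR Y 0 ω) hH
        le_rfl (s := {ω | disIdx k τ ω = none}) ?_
        (restrict_eq_on_none h.hb.hmono hτ k)
      · rw [condExp_of_stronglyMeasurable le_rfl ?_ hSint] at this
        · exact (ae_restrict_iff' (disIdx_meas0 h.hb.hle h.hb.hmono hτ k none)).1 this
        · exact stronglyMeasurable_const.mul ((h.hb.SR_meas 0).mono h.hb.sup_le)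
      · have := restrict_eq_on_none (m0 := m0) h.hb.hmono hτ k univ
        rw [inter_univ] at this
        replace this := this.2
        exact this (disIdx_meas0 h.hb.hle h.hb.hmono hτ k none)
    have h3 : ∀ᵐ ω ∂μ, ∀ i, Zr (dyp k i) ω ≤ (μ[fun ω => M * SR Y 0 ω | 𝔉 (dyp k i)]) ω :=
      ae_all_iff.2 fun i => h.upper (dyp k i).2
    filter_upwards [ae_all_iff.2 h1, h2, h3, h.hb.SE_ae] with ω h1 h2 h3 hfin
    rw [evI_dis]
    rcases ho : disIdx k τ ω with _ | i
    · rw [h2 ho]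
      exact mul_le_mul_of_nonneg_left (Yi_le_SR hfin 0) (Nat.cast_nonneg _)
    · rw [h1 i ho]
      exact h3 i

end zfacts

section directions

variable {μ : Measure Ω} {𝔉 : ℝ≥0 → MeasurableSpace Ω} {Y : ℝ≥0 → Ω → ℝ}
variable {X : ℝ≥0 → Ω → ℝ} {B : ℕ → Set ℝ} {M : ℕ} {W Zr : ℝ≥0 → Ω → ℝ}

lemma reward_congr (Y : ℝ≥0 → Ω → ℝ) (n : ℕ) {T T' : ℕ → Ω → ℝ≥0∞} {ω : Ω}
    (h : ∀ i, T i ω = T' i ω) : rewardSum Y n T ω = rewardSum Y n T' ω := by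
  simp only [rewardSum, evalAt, h]

lemma reward_succ (Y : ℝ≥0 → Ω → ℝ) (n : ℕ) (T : ℕ → Ω → ℝ≥0∞) (ω : Ω) :
    rewardSum Y (n + 1) T ω = rewardSum Y n (fun i => T (i + 1)) ω + evalAt Y (T 0) ω := by
  simp only [rewardSum, Finset.sum_range_succ']

lemma dis_some {k i : ℕ} {τ : Ω → ℝ≥0∞} {ω : Ω} (h : disIdx k τ ω = some i) :
    dis k τ ω = dyp k i := by
  unfold dis; rw [h]; rfl

lemma dis_none {k : ℕ} {τ : Ω → ℝ≥0∞} {ω : Ω} (h : disIdx k τ ω = none) :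
    dis k τ ω = ∞ := by
  unfold dis; rw [h]; rfl

lemma reward_top_at (hb : Base μ 𝔉 Y) (n : ℕ) (T : ℕ → Ω → ℝ≥0∞) :
    ∀ᵐ ω ∂μ, (∀ i < n, T i ω = ∞) → rewardSum Y n T ω = n * Yi Y ω := by
  filter_upwards [hb.reward_top n] with ω hω h
  rw [← hω]
  unfold rewardSum
  refine Finset.sum_congr rfl fun i hi => ?_
  simp only [evalAt, h i (Finset.mem_range.1 hi)]

lemma ZF.step1 [IsFiniteMeasure μ] (h : ZF μ 𝔉 Y X B M W Zr)
    (hhit : ∀ i, i + 1 < M + 1 → ∀ s : ℝ≥0,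
      IsStoppingTimeE 𝔉 (hitAfterE X (B i) (fun _ => (s : ℝ≥0∞))))
    {σ : Ω → ℝ≥0∞} (hσ : IsStoppingTimeE 𝔉 σ) (hG : sigmaAt 𝔉 σ ≤ m0)
    {τ : ℕ → Ω → ℝ≥0∞} (hτ : IsStrategyB 𝔉 X B (M + 1) σ τ) {A : Set Ω}
    (hA : MeasurableSet[sigmaAt 𝔉 σ] A) (k : ℕ) :
    ∫ ω in A, rewardSum Y M (push X B τ (dis k (τ 0))) ω ∂μ ≤
      ∫ ω in A, evI Zr (fun ω => M * Yi Y ω) (dis k (τ 0)) ω ∂μ := by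
  have hτ0 : IsStoppingTimeE 𝔉 (τ 0) := hτ.1 0 (by omega)
  have hps : ∀ d, IsStoppingTimeE 𝔉 d → IsStrategyB 𝔉 X (fun i => B (i + 1)) M
      (hitAfterE X (B 0) d) (push X B τ d) :=
    fun d hd => push_strategy h.hb.hmono h.hb.hrc X B M hhit τ hτ.1 d hd
  have hd := stop_dis h.hb.hmono hτ0 k
  have hJ := disIdx_meas0 h.hb.hle h.hb.hmono hτ0 k
  refine setIntegral_partition_le (disIdx k (τ 0)) hJ (h.hb.reward_int (hps _ hd).1)
    ((h.ui hτ0).1 k) (hG _ hA) ?_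
  rintro (_ | i)
  · refine (setIntegral_congr_ae ((hG _ hA).inter (hJ none)) ?_).le
    filter_upwards [reward_top_at h.hb M (push X B τ (dis k (τ 0)))] with ω h1 h2
    have h3 : disIdx k (τ 0) ω = none := h2.2
    rw [evI_dis, h3, h1]
    · rfl
    · intro i hi
      refine top_le_iff.1 ((hit_top X (B 0) (dis_none h3)).symm.le.trans ?_)
      exact strategy_ge (hps _ hd) i hi ω
  · have hP : MeasurableSet[𝔉 (dyp k i)] (A ∩ {ω | disIdx k (τ 0) ω = some i}) :=
      disIdx_inter_meas h.hb.hmono hτ.2.1 hτ0 ((measurableSet_sigmaAt hσ).1 hA) k i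
    have hP0 := h.hb.hle _ _ hP
    have hst := hps (fun _ => (dyp k i : ℝ≥0∞)) (stop_const 𝔉 _)
    have hRint := h.hb.reward_int hst.1
    calc ∫ ω in A ∩ {ω | disIdx k (τ 0) ω = some i},
          rewardSum Y M (push X B τ (dis k (τ 0))) ω ∂μ
        = ∫ ω in A ∩ {ω | disIdx k (τ 0) ω = some i},
          rewardSum Y M (push X B τ (fun _ => (dyp k i : ℝ≥0∞))) ω ∂μ :=
          setIntegral_congr_fun hP0 fun ω hω =>
            reward_congr Y M fun j => push_congr X B τ (dis_some hω.2) j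
      _ = ∫ ω in A ∩ {ω | disIdx k (τ 0) ω = some i},
          (μ[rewardSum Y M (push X B τ (fun _ => (dyp k i : ℝ≥0∞))) |
            sigmaAt 𝔉 (hitAfterE X (B 0) (fun _ => (dyp k i : ℝ≥0∞)))]) ω ∂μ :=
          (setIntegral_condExp (h.hm _) hRint (h.hge _ _ hP)).symm
      _ ≤ ∫ ω in A ∩ {ω | disIdx k (τ 0) ω = some i}, W (dyp k i) ω ∂μ :=
          setIntegral_mono_ae integrable_condExp.integrableOn (h.ess _).int.integrableOn
            (h.dom _ _ hst)
      _ = ∫ ω in A ∩ {ω | disIdx k (τ 0) ω = some i}, Zr (dyp k i) ω ∂μ := (h.setInt _ hP).symm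
      _ = _ := by
          refine setIntegral_congr_fun hP0 fun ω hω => ?_
          have h3 : disIdx k (τ 0) ω = some i := hω.2
          simp only [evI_dis, h3]
          rfl

lemma ZF.dir1 [IsFiniteMeasure μ] (h : ZF μ 𝔉 Y X B M W Zr)
    (hhit : ∀ i, i + 1 < M + 1 → ∀ s : ℝ≥0,
      IsStoppingTimeE 𝔉 (hitAfterE X (B i) (fun _ => (s : ℝ≥0∞))))
    {σ : Ω → ℝ≥0∞} (hσ : IsStoppingTimeE 𝔉 σ) (hG : sigmaAt 𝔉 σ ≤ m0)
    {τ : ℕ → Ω → ℝ≥0∞} (hτ : IsStrategyB 𝔉 X B (M + 1) σ τ) :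
    μ[rewardSum Y (M + 1) τ | sigmaAt 𝔉 σ] ≤ᵐ[μ]
      μ[evalAt (fun t ω => Y t ω + Zr t ω) (τ 0) | sigmaAt 𝔉 σ] := by
  have hτ0 : IsStoppingTimeE 𝔉 (τ 0) := hτ.1 0 (by omega)
  have hui := h.ui hτ0
  have heq : evalAt (fun t ω => Y t ω + Zr t ω) (τ 0) =ᵐ[μ]
      fun ω => evI Zr (fun ω => M * Yi Y ω) (τ 0) ω + evalAt Y (τ 0) ω := by
    filter_upwards [h.evalAt_ae, h.hb.evalAt_ae] with ω h1 h2
    rw [h1, h2, add_comm]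
  have hYi := h.hb.evalAt_int hτ0
  have hRi : Integrable (rewardSum Y M (fun i => τ (i + 1))) μ :=
    h.hb.reward_int fun i hi => hτ.1 (i + 1) (by omega)
  have hi2 : Integrable (fun ω => evI Zr (fun ω => M * Yi Y ω) (τ 0) ω + evalAt Y (τ 0) ω) μ :=
    hui.2.1.add hYi
  refine (condExp_le_of_setIntegral hG (h.hb.reward_int hτ.1) hi2 ?_).trans
    (condExp_congr_ae heq).symm.le
  intro A hA
  simp only [reward_succ]
  rw [integral_add hRi.integrableOn hYi.integrableOn,
    integral_add hui.2.1.integrableOn hYi.integrableOn]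
  refine add_le_add_left ?_ _
  have hps : ∀ k, IsStrategyB 𝔉 X (fun i => B (i + 1)) M
      (hitAfterE X (B 0) (dis k (τ 0))) (push X B τ (dis k (τ 0))) :=
    fun k => push_strategy h.hb.hmono h.hb.hrc X B M hhit τ hτ.1 _
      (stop_dis h.hb.hmono hτ0 k)
  have hR : Tendsto (fun k => ∫ ω in A, evI Zr (fun ω => M * Yi Y ω) (dis k (τ 0)) ω ∂μ) atTop
      (𝓝 (∫ ω in A, evI Zr (fun ω => M * Yi Y ω) (τ 0) ω ∂μ)) :=
    tendsto_setIntegral_of_L1' _ hui.2.1.1 (Eventually.of_forall hui.1) hui.2.2 A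
  have hL : Tendsto (fun k => ∫ ω in A, rewardSum Y M (push X B τ (dis k (τ 0))) ω ∂μ) atTop
      (𝓝 (∫ ω in A, rewardSum Y M (fun i => τ (i + 1)) ω ∂μ)) := by
    refine tendsto_integral_of_dominated_convergence (fun ω => M * SR Y 0 ω)
      (fun k => (h.hb.reward_int (hps k).1).1.restrict)
      ((h.hb.SR_int 0).const_mul _).integrableOn ?_ ?_
    · intro k
      refine ae_restrict_of_ae ?_
      filter_upwards [h.hb.reward_nonneg M (push X B τ (dis k (τ 0))),
        h.hb.reward_le M (push X B τ (dis k (τ 0))) 0 (fun i _ ω => by simp)] with ω h1 h2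
      rw [Real.norm_of_nonneg h1]
      exact h2
    · refine ae_restrict_of_ae ?_
      filter_upwards [h.hb.evalAt_ae] with ω h1
      unfold rewardSum
      refine tendsto_finsetSum _ fun i hi => ?_
      simp only [h1]
      refine evI_tendsto h.hb.hYrc (fun k => push_ge X B τ _ ω i) ?_
      exact push_tendsto X B τ (fun k => dis k (τ 0)) (M + 1) ω (fun i hi => hτ.2.2 i hi ω)
        (fun k => le_dis k _ ω) (dis_tendsto _ ω) i (by have := Finset.mem_range.1 hi; omega)
  exact le_of_tendsto_of_tendsto' hL hR fun k => h.step1 hhit hσ hG hτ hA k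

/-- Prepend a time to a strategy. -/
def consS (d : Ω → ℝ≥0∞) (U : ℕ → Ω → ℝ≥0∞) : ℕ → Ω → ℝ≥0∞
  | 0 => d
  | l + 1 => U l

lemma ZF.step2 [IsFiniteMeasure μ] (h : ZF μ 𝔉 Y X B M W Zr)
    (hhit : ∀ s : ℝ≥0, IsStoppingTimeE 𝔉 (hitAfterE X (B 0) (fun _ => (s : ℝ≥0∞))))
    {σ : Ω → ℝ≥0∞} (hσ : IsStoppingTimeE 𝔉 σ) (hG : sigmaAt 𝔉 σ ≤ m0)
    {τ : Ω → ℝ≥0∞} (hτ : IsStoppingTimeE 𝔉 τ) (hστ : ∀ ω, σ ω ≤ τ ω) (k : ℕ) {ε : ℝ}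
    (hε : 0 < ε) :
    ∃ S, IsStrategyB 𝔉 X B (M + 1) σ S ∧
      ∀ᵐ ω ∂μ, (μ[fun ω => evI Zr (fun ω => M * Yi Y ω) (dis k τ) ω + evalAt Y (dis k τ) ω |
        sigmaAt 𝔉 σ]) ω ≤ (μ[rewardSum Y (M + 1) S | sigmaAt 𝔉 σ]) ω + ε := by
  choose T hT hTε using fun t => (h.ess t).attain ε hε
  have hd := stop_dis h.hb.hmono hτ k
  have hJ := disIdx_meas0 h.hb.hle h.hb.hmono hτ k
  let π : Option ℕ → Ω → ℝ≥0∞ := fun o => match o with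
    | none => fun _ => ∞
    | some i => hitAfterE X (B 0) (fun _ => (dyp k i : ℝ≥0∞))
  let V : Option ℕ → ℕ → Ω → ℝ≥0∞ := fun o => match o with
    | none => fun _ _ => ∞
    | some i => T (dyp k i)
  have hU : IsStrategyB 𝔉 X (fun i => B (i + 1)) M (hitAfterE X (B 0) (dis k τ))
      (fun l ω => V (disIdx k τ ω) l ω) := by
    refine strategy_glue (disIdx k τ) π V ?_ ?_ _ ?_
    · rintro (_ | i)
      · exact strategy_top X _ M _
      · exact hT (dyp k i)
    · rintro (_ | i) t
      · have : {ω | disIdx k τ ω = none} ∩ {ω | π none ω ≤ (t : ℝ≥0∞)} = ∅ := by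
          ext ω
          simp [π]
        rw [this]
        exact @MeasurableSet.empty _ (𝔉 t)
      · by_cases ht : dyp k i ≤ t
        · exact MeasurableSet.inter (h.hb.hmono ht _ (disIdx_meas h.hb.hmono hτ k i))
            (hhit (dyp k i) t)
        · have : {ω | disIdx k τ ω = some i} ∩ {ω | π (some i) ω ≤ (t : ℝ≥0∞)} = ∅ := by
            ext ω
            simp only [mem_inter_iff, mem_ofPred_eq, mem_empty_iff_false, iff_false, not_and,
              not_le]
            intro _
            exact lt_of_lt_of_le (ENNReal.coe_lt_coe.2 (not_le.1 ht))
              (le_hit X (B 0) (fun _ => (dyp k i : ℝ≥0∞)) ω)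
          rw [this]
          exact @MeasurableSet.empty _ (𝔉 t)
    · intro ω
      rcases ho : disIdx k τ ω with _ | i
      · exact le_top
      · exact (hit_congr X (B 0) (τ' := fun _ => (dyp k i : ℝ≥0∞)) (dis_some ho)).le
  have hS : IsStrategyB 𝔉 X B (M + 1) σ (consS (dis k τ) fun l ω => V (disIdx k τ ω) l ω) := by
    refine ⟨?_, fun ω => (hστ ω).trans (le_dis k τ ω), ?_⟩
    · rintro (_ | i) hi
      · exact hd
      · exact hU.1 i (by omega)
    · rintro (_ | i) hi ω
      · exact hU.2.1 ω
      · exact hU.2.2 i (by omega) ω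
  refine ⟨_, hS, ?_⟩
  have hui := h.ui hτ
  have hYd := h.hb.evalAt_int hd
  have hRU := h.hb.reward_int hU.1
  have hRS := h.hb.reward_int hS.1
  have hi1 : Integrable (fun ω => evI Zr (fun ω => M * Yi Y ω) (dis k τ) ω +
      evalAt Y (dis k τ) ω) μ := (hui.1 k).add hYd
  have hcE : μ[fun ω => rewardSum Y (M + 1) (consS (dis k τ) fun l ω => V (disIdx k τ ω) l ω) ω
      + ε | sigmaAt 𝔉 σ] =ᵐ[μ] fun ω => (μ[rewardSum Y (M + 1)
        (consS (dis k τ) fun l ω => V (disIdx k τ ω) l ω) | sigmaAt 𝔉 σ]) ω + ε := by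
    have := condExp_add hRS (integrable_const ε) (sigmaAt 𝔉 σ)
    rw [condExp_const hG] at this
    exact this
  have hRSe : Integrable (fun ω => rewardSum Y (M + 1)
      (consS (dis k τ) fun l ω => V (disIdx k τ ω) l ω) ω + ε) μ := hRS.add (integrable_const ε)
  refine (condExp_le_of_setIntegral hG hi1 hRSe ?_).trans hcE.le
  intro A hA
  have hre : ∀ ω, rewardSum Y (M + 1) (consS (dis k τ) fun l ω => V (disIdx k τ ω) l ω) ω + ε
      = (rewardSum Y M (fun l ω => V (disIdx k τ ω) l ω) ω + ε) +
        evalAt Y (dis k τ) ω := by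
    intro ω
    rw [reward_succ]
    simp only [consS]
    ring
  simp only [hre]
  have hRUe : Integrable (fun ω => rewardSum Y M (fun l ω => V (disIdx k τ ω) l ω) ω + ε) μ :=
    hRU.add (integrable_const ε)
  rw [integral_add (hui.1 k).integrableOn hYd.integrableOn,
    integral_add hRUe.integrableOn hYd.integrableOn]
  refine add_le_add_left ?_ _
  refine setIntegral_partition_le (disIdx k τ) hJ (hui.1 k) hRUe (hG _ hA) ?_
  rintro (_ | i)
  · refine setIntegral_mono_on_ae (hui.1 k).integrableOn hRUe.integrableOn
      ((hG _ hA).inter (hJ none)) ?_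
    filter_upwards [reward_top_at h.hb M (fun l ω => V (disIdx k τ ω) l ω)] with ω h1 h2
    have h3 : disIdx k τ ω = none := h2.2
    rw [evI_dis, h3, h1]
    · show (M : ℝ) * Yi Y ω ≤ _
      linarith
    · intro i hi
      rw [h3]
  · have hP : MeasurableSet[𝔉 (dyp k i)] (A ∩ {ω | disIdx k τ ω = some i}) :=
      disIdx_inter_meas h.hb.hmono hστ hτ ((measurableSet_sigmaAt hσ).1 hA) k i
    have hP0 := h.hb.hle _ _ hP
    have hRint := h.hb.reward_int (hT (dyp k i)).1
    calc ∫ ω in A ∩ {ω | disIdx k τ ω = some i}, evI Zr (fun ω => M * Yi Y ω) (dis k τ) ω ∂μ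
        = ∫ ω in A ∩ {ω | disIdx k τ ω = some i}, Zr (dyp k i) ω ∂μ := by
          refine setIntegral_congr_fun hP0 fun ω hω => ?_
          have h3 : disIdx k τ ω = some i := hω.2
          simp only [evI_dis, h3]
          rfl
      _ = ∫ ω in A ∩ {ω | disIdx k τ ω = some i}, W (dyp k i) ω ∂μ := h.setInt _ hP
      _ ≤ ∫ ω in A ∩ {ω | disIdx k τ ω = some i}, ((μ[rewardSum Y M (T (dyp k i)) |
            sigmaAt 𝔉 (hitAfterE X (B 0) (fun _ => (dyp k i : ℝ≥0∞)))]) ω + ε) ∂μ := by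
          refine setIntegral_mono_ae (h.ess _).int.integrableOn
            (integrable_condExp.add (integrable_const ε)).integrableOn ?_
          filter_upwards [hTε (dyp k i)] with ω hω
          linarith
      _ = ∫ ω in A ∩ {ω | disIdx k τ ω = some i}, (rewardSum Y M (T (dyp k i)) ω + ε) ∂μ := by
          rw [integral_add integrable_condExp.integrableOn (integrable_const ε).integrableOn,
            integral_add hRint.integrableOn (integrable_const ε).integrableOn,
            setIntegral_condExp (h.hm _) hRint (h.hge _ _ hP)]
      _ = _ := by
          refine setIntegral_congr_fun hP0 fun ω hω => ?_
          have h3 : disIdx k τ ω = some i := hω.2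
          show _ + ε = _ + ε
          congr 1
          refine reward_congr Y M fun j => ?_
          rw [h3]

lemma condExp_lim_le [IsFiniteMeasure μ] {G : MeasurableSpace Ω} {u : ℕ → Ω → ℝ} {v Z : Ω → ℝ}
    (hu : ∀ k, Integrable (u k) μ) (hv : Integrable v μ)
    (hlim : Tendsto (fun k => eLpNorm (u k - v) 1 μ) atTop (𝓝 0))
    (h : ∀ k, μ[u k | G] ≤ᵐ[μ] Z) : μ[v | G] ≤ᵐ[μ] Z := by
  have h1 : Tendsto (fun k => eLpNorm (μ[u k | G] - μ[v | G]) 1 μ) atTop (𝓝 0) := by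
    refine tendsto_of_tendsto_of_tendsto_of_le_of_le tendsto_const_nhds hlim
      (fun _ => zero_le) fun k => ?_
    rw [← eLpNorm_congr_ae (condExp_sub (hu k) hv G)]
    exact eLpNorm_condExp_le_eLpNorm _ le_rfl
  have h2 := tendstoInMeasure_of_tendsto_eLpNorm one_ne_zero
    (fun k => integrable_condExp.aestronglyMeasurable)
    integrable_condExp.aestronglyMeasurable h1
  obtain ⟨ns, -, h3⟩ := h2.exists_seq_tendsto_ae
  filter_upwards [h3, ae_all_iff.2 h] with ω h3 h4
  exact le_of_tendsto' h3 fun j => h4 _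

lemma ZF.dir2 [IsFiniteMeasure μ] (h : ZF μ 𝔉 Y X B M W Zr)
    (hhit : ∀ s : ℝ≥0, IsStoppingTimeE 𝔉 (hitAfterE X (B 0) (fun _ => (s : ℝ≥0∞))))
    {σ : Ω → ℝ≥0∞} (hσ : IsStoppingTimeE 𝔉 σ) (hG : sigmaAt 𝔉 σ ≤ m0)
    {τ : Ω → ℝ≥0∞} (hτ : IsStoppingTimeE 𝔉 τ) (hστ : ∀ ω, σ ω ≤ τ ω) {Z : Ω → ℝ}
    (hZ : ∀ S, IsStrategyB 𝔉 X B (M + 1) σ S →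
      μ[rewardSum Y (M + 1) S | sigmaAt 𝔉 σ] ≤ᵐ[μ] Z) :
    μ[evalAt (fun t ω => Y t ω + Zr t ω) τ | sigmaAt 𝔉 σ] ≤ᵐ[μ] Z := by
  have hui := h.ui hτ
  have hsd := fun k => stop_dis h.hb.hmono hτ k
  have hSm : StronglyMeasurable (SR Y 0) := (h.hb.SR_meas 0).mono h.hb.sup_le
  have hY := ui_conv (μ := μ) (h.hb.SR_int 0) (H := fun _ => m0) (fun _ => le_rfl)
    (u := fun k => evI Y (Yi Y) (dis k τ)) (v := evI Y (Yi Y) τ)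
    (fun k => (h.hb.evI_int (hsd k)).1)
    (fun k => Eventually.of_forall fun ω => evI_nonneg h.hb.hYpos _ ω)
    (fun k => by
      rw [condExp_of_stronglyMeasurable le_rfl hSm (h.hb.SR_int 0)]
      filter_upwards [h.hb.SE_ae] with ω hω
      exact evI_le_SR hω (by simp))
    (Eventually.of_forall fun ω => evI_tendsto h.hb.hYrc (fun k => le_dis k τ ω)
      (dis_tendsto τ ω))
  have heq : evalAt (fun t ω => Y t ω + Zr t ω) τ =ᵐ[μ]
      evI Zr (fun ω => M * Yi Y ω) τ + evI Y (Yi Y) τ := by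
    filter_upwards [h.evalAt_ae] with ω h1
    rw [h1, add_comm]
    rfl
  have hlim : Tendsto (fun k => eLpNorm ((evI Zr (fun ω => M * Yi Y ω) (dis k τ) +
      evI Y (Yi Y) (dis k τ)) - (evI Zr (fun ω => M * Yi Y ω) τ + evI Y (Yi Y) τ)) 1 μ)
      atTop (𝓝 0) := by
    have h0 := hui.2.2.add hY.2.2
    rw [add_zero] at h0
    refine tendsto_of_tendsto_of_tendsto_of_le_of_le tendsto_const_nhds h0
      (fun _ => zero_le) fun k => ?_
    rw [add_sub_add_comm]
    exact eLpNorm_add_le ((hui.1 k).sub hui.2.1).1 ((hY.1 k).sub hY.2.1).1 le_rfl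
  have hfin : ∀ j : ℕ, μ[evalAt (fun t ω => Y t ω + Zr t ω) τ | sigmaAt 𝔉 σ] ≤ᵐ[μ]
      fun ω => Z ω + 1 / ((j : ℝ) + 1) := by
    intro j
    refine (condExp_congr_ae heq).le.trans ?_
    refine condExp_lim_le (fun k => (hui.1 k).add (hY.1 k)) (hui.2.1.add hY.2.1) hlim ?_
    intro k
    obtain ⟨S, hS, hSε⟩ := h.step2 hhit hσ hG hτ hστ k
      (show (0 : ℝ) < 1 / ((j : ℝ) + 1) by positivity)
    have heqk : (evI Zr (fun ω => M * Yi Y ω) (dis k τ) + evI Y (Yi Y) (dis k τ)) =ᵐ[μ]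
        fun ω => evI Zr (fun ω => M * Yi Y ω) (dis k τ) ω + evalAt Y (dis k τ) ω := by
      filter_upwards [h.hb.evalAt_ae] with ω h1
      rw [h1]
      rfl
    refine (condExp_congr_ae heqk).le.trans ?_
    filter_upwards [hSε, hZ S hS] with ω h1 h2
    linarith
  filter_upwards [ae_all_iff.2 hfin] with ω hω
  have : Tendsto (fun j : ℕ => Z ω + 1 / ((j : ℝ) + 1)) atTop (𝓝 (Z ω + 0)) :=
    tendsto_one_div_add_atTop_nhds_zero_nat.const_add _
  rw [add_zero] at this
  exact ge_of_tendsto' this hω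

end directions

/-- **main reduction theorem, second model.** `Y_n = Y + Z̄^{B,r}_{n-1}` is
`𝔉`-adapted and right-continuous, and for every `𝔉`-stopping time `σ`,
`Z_n^B(σ) = esssup_{τ ∈ 𝒮_σ} 𝔼(Y_n(τ)|𝓕_σ)` a.s.  Here `W t` is a version of
`Z_{n-1}^{LB}(ρ_t^{B₁})` and `Zr` is a right-continuous modification of
`t ↦ 𝔼(W t|𝓕_t)`. -/
theorem main_reduction_second_model
    (μ : Measure Ω) [IsProbabilityMeasure μ]
    (𝔉 : ℝ≥0 → MeasurableSpace Ω) (hle : ∀ t, 𝔉 t ≤ m0) (hmono : Monotone 𝔉)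
    (hrc : RightContinuousFilt 𝔉)
    (hnull : ∀ A : Set Ω, μ A = 0 → MeasurableSet[𝔉 0] A)
    (Y : ℝ≥0 → Ω → ℝ) (hadapt : ∀ t, Measurable[𝔉 t] (Y t))
    (hYpos : ∀ t ω, 0 ≤ Y t ω)
    (hYrc : ∀ ω t, ContinuousWithinAt (fun s => Y s ω) (Set.Ici t) t)
    (hYint : ∫⁻ ω, ⨆ t : ℝ≥0, ENNReal.ofReal (Y t ω) ∂μ < ∞)
    (n : ℕ) (hn : 2 ≤ n)
    (X : ℝ≥0 → Ω → ℝ) (hXad : ∀ t, Measurable[𝔉 t] (X t))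
    (hXrc : ∀ ω t, ContinuousWithinAt (fun s => X s ω) (Set.Ici t) t)
    (B : ℕ → Set ℝ) (hB : ∀ i, i + 1 < n → MeasurableSet (B i))
    (hhit : ∀ i, i + 1 < n → ∀ s : ℝ≥0,
      IsStoppingTimeE 𝔉 (hitAfterE X (B i) (fun _ => (s : ℝ≥0∞))))
    (hfin : ∀ i, i + 1 < n → ∀ s : ℝ≥0,
      ∀ᵐ ω ∂μ, hitAfterE X (B i) (fun _ => (s : ℝ≥0∞)) ω < ∞)
    (W : ℝ≥0 → Ω → ℝ)
    (hW : ∀ t : ℝ≥0, IsEssSupFam μ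
      (gainFamB μ Y 𝔉 X (fun i => B (i + 1)) (n - 1)
        (hitAfterE X (B 0) (fun _ => (t : ℝ≥0∞)))) (W t))
    (Zr : ℝ≥0 → Ω → ℝ)
    (hZrc : ∀ ω t, ContinuousWithinAt (fun s => Zr s ω) (Set.Ici t) t)
    (hZmod : ∀ t : ℝ≥0, Zr t =ᵐ[μ] μ[W t | 𝔉 t])
    (σ : Ω → ℝ≥0∞) (hσ : IsStoppingTimeE 𝔉 σ) :
    (∀ t, Measurable[𝔉 t] (fun ω => Y t ω + Zr t ω)) ∧
    (∀ ω t, ContinuousWithinAt (fun s => Y s ω + Zr s ω) (Set.Ici t) t) ∧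
    (∀ Z Z' : Ω → ℝ, IsEssSupFam μ (gainFamB μ Y 𝔉 X B n σ) Z →
      IsEssSupFam μ
        {g | ∃ τ : Ω → ℝ≥0∞, IsStoppingTimeE 𝔉 τ ∧ (∀ ω, σ ω ≤ τ ω) ∧
          g = μ[evalAt (fun t ω => Y t ω + Zr t ω) τ | sigmaAt 𝔉 σ]} Z' →
      Z =ᵐ[μ] Z') := by
  obtain ⟨m, rfl⟩ : ∃ m, n = m + 1 := ⟨n - 1, by omega⟩
  have hb : Base μ 𝔉 Y := ⟨hle, hmono, hrc, hnull, hadapt, hYpos, hYrc, hYint⟩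
  simp only [Nat.add_sub_cancel] at hW
  have hhit0 := hhit 0 (by omega)
  have hm : ∀ t : ℝ≥0, sigmaAt 𝔉 (hitAfterE X (B 0) (fun _ => (t : ℝ≥0∞))) ≤ m0 :=
    fun t => hb.sigmaAt_le (hhit0 t) (hfin 0 (by omega) t)
  have h : ZF μ 𝔉 Y X B m W Zr :=
    ⟨hb, hZrc, fun t => hb.essFacts X _ m (hhit0 t) (hm t) (hW t), hm,
      fun t => le_sigmaAt hmono (hhit0 t) fun ω => le_hit X (B 0) (fun _ => (t : ℝ≥0∞)) ω,
      fun t T hT => (hW t).1 _ ⟨T, hT, rfl⟩, hZmod⟩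
  refine ⟨fun t => (hadapt t).add (h.meas t), fun ω t => (hYrc ω t).add (hZrc ω t), ?_⟩
  intro Z Z' hZ hZ'
  by_cases hG : sigmaAt 𝔉 σ ≤ m0
  · refine Filter.EventuallyLE.antisymm (hZ.2 _ ?_) (hZ'.2 _ ?_)
    · rintro f ⟨τ, hτ, rfl⟩
      exact (h.dir1 hhit hσ hG hτ).trans (hZ'.1 _ ⟨τ 0, hτ.1 0 (by omega), hτ.2.1, rfl⟩)
    · rintro f ⟨τ, hτ, hστ, rfl⟩
      exact h.dir2 hhit0 hσ hG hτ hστ fun S hS => hZ.1 _ ⟨S, hS, rfl⟩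
  · refine Filter.EventuallyLE.antisymm (hZ.2 _ ?_) (hZ'.2 _ ?_)
    · rintro f ⟨τ, hτ, rfl⟩
      have h1 := hZ'.1 _ ⟨fun _ => ∞, stop_top 𝔉, fun _ => le_top, rfl⟩
      rw [condExp_of_not_le hG] at h1 ⊢
      exact h1
    · rintro f ⟨τ, hτ, hστ, rfl⟩
      have h1 := hZ.1 _ ⟨_, strategy_top X B (m + 1) σ, rfl⟩
      rw [condExp_of_not_le hG] at h1 ⊢
      exact h1

end
end
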